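/- arXiv:2311.11996 — 2 statements merged into one kernel-verified Lean document; each statement's English description precedes it below -/
import Mathlib

section
/- Let M be a loopless matroid of rank r ≥ 1 on a finite ground set E, let S_1,…,S_m be pairwise distinct nonempty subsets of E, and let k_1,…,k_m be nonnegative integers. Define χ(q) = Σ_{κ} Π_{i=1}^m binom(q·k_i + κ_i − 1, κ_i), where the (finite) sum is over all κ ∈ ℤ_{≥0}^m satisfying the dragon Hall–Rado condition; this is a polynomial in q of some degree d ≥ 0 with χ(0)=1. Define rational numbers h_0,…,h_d by χ(q) = Σ_{j=0}^d h_j·binom(q+d−j, d). Then (h_0,…,h_d) is a Macaulay vector; in particular each h_j is a nonnegative integer. -/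
open Finset Polynomial

/-- The rank-function axioms of a matroid on a finite ground set: a matroid is a polymatroid
with cage `(1, …, 1)`. -/
def IsMatroidRank {α : Type*} [Fintype α] [DecidableEq α] (rk : Finset α → ℕ) : Prop :=
  rk ∅ = 0 ∧ (∀ I J : Finset α, I ⊆ J → rk I ≤ rk J) ∧
    (∀ I J : Finset α, rk (I ∩ J) + rk (I ∪ J) ≤ rk I + rk J) ∧
    ∀ e : α, rk {e} ≤ 1

/-- The dragon Hall–Rado condition for a tuple `κ ∈ ℤ_{≥0}^m` with respect to subsets
`S_1, …, S_m` of the ground set of a matroid with rank function `rk`. -/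
def DragonHallRado {α : Type*} [Fintype α] [DecidableEq α] (rk : Finset α → ℕ) {m : ℕ}
    (S : Fin m → Finset α) (κ : Fin m → ℕ) : Prop :=
  ∀ I : Finset (Fin m), I.Nonempty → 1 + ∑ i ∈ I, κ i ≤ rk (I.biUnion S)

/-- `binomLowerP p k` is `binom(p + k - 1, k) = p(p+1)⋯(p+k-1)/k!`. -/
noncomputable def binomLowerP (p : Polynomial ℚ) (k : ℕ) : Polynomial ℚ :=
  (k.factorial : ℚ)⁻¹ • ∏ j ∈ Finset.range k, (p + Polynomial.C (j : ℚ))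

/-- A sequence `(h 0, …, h d)` is a Macaulay vector if `(h 0, …, h d, 0, 0, …)` is the Hilbert
function of a graded artinian commutative algebra `A` over a field `𝕜`, with `A^0 = 𝕜`,
generated as a `𝕜`-algebra in degree `1`. -/
def IsMacaulayVector (d : ℕ) (h : ℕ → ℚ) : Prop :=
  ∃ (𝕜 A : Type) (_ : Field 𝕜) (_ : CommRing A) (_ : Algebra 𝕜 A)
    (𝒜 : ℕ → Submodule 𝕜 A) (_ : GradedAlgebra 𝒜),
      IsArtinianRing A ∧
      (∀ x ∈ 𝒜 0, ∃ c : 𝕜, x = algebraMap 𝕜 A c) ∧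
      Algebra.adjoin 𝕜 (𝒜 1 : Set A) = ⊤ ∧
      (∀ k : ℕ, Module.Finite 𝕜 (𝒜 k)) ∧
      ∀ k : ℕ, (Module.finrank 𝕜 (𝒜 k) : ℚ) = if k ≤ d then h k else 0

/-!
Replacing each `S_i` by `k_i` copies of itself turns `χ(q)` into `∑ v, ∏ i, multichoose q (v i)`,
where `v` ranges over the vectors of a discrete polymatroid, and this sum counts the multichains of
length `q` in the polymatroid. Every such multichain consists of prefixes of a word spelling a
basis. In a suitable linear order the words form a shelling of the complex of their chains of
prefixes, so that each multichain is counted once, at the first word through which it passes; hence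
`h_j` is the number of words whose restriction set has `j` elements. The shelling also shows that
the span of the indicator functions of the partial chains, filtered by the number of prescribed
prefixes, has an associated graded algebra whose quotient by generic relations of degree one is
standard graded and has the `h_j` as its Hilbert function.
-/

section QuotientGrading

open DirectSum

variable {ι 𝕜 R : Type*} [CommRing 𝕜] [CommRing R] [Algebra 𝕜 R]

/-- The family of images of the graded pieces `𝒜 i` in the quotient `R ⧸ I`. -/
def quotientGrading (𝒜 : ι → Submodule 𝕜 R) (I : Ideal R) (i : ι) : Submodule 𝕜 (R ⧸ I) :=
  (𝒜 i).map (Ideal.Quotient.mkₐ 𝕜 I).toLinearMap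

variable [DecidableEq ι] [AddMonoid ι] (𝒜 : ι → Submodule 𝕜 R) [GradedAlgebra 𝒜] {I : Ideal R}

lemma isInternal_quotientGrading (hI : I.IsHomogeneous 𝒜) :
    IsInternal (quotientGrading 𝒜 I) := by
  let mkPiece (i : ι) : 𝒜 i →ₗ[𝕜] quotientGrading 𝒜 I i :=
    (Ideal.Quotient.mkₐ 𝕜 I).toLinearMap.submoduleMap (𝒜 i)
  have coe_lmap (a : R) :
      DirectSum.coeAddMonoidHom (quotientGrading 𝒜 I) (lmap mkPiece (decompose 𝒜 a)) =
        Ideal.Quotient.mk I a := by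
    induction a using Decomposition.inductionOn 𝒜 with
    | zero => simp
    | homogeneous a =>
      rw [decompose_coe, lmap_of, DirectSum.coeAddMonoidHom_of]
      rfl
    | add a b ha hb => simp only [decompose_add, map_add, ha, hb]
  refine ⟨(injective_iff_map_eq_zero _).2 fun x hx ↦ ?_, fun x ↦ ?_⟩
  · obtain ⟨x, rfl⟩ := (lmap_surjective mkPiece).2 (fun i ↦ LinearMap.submoduleMap_surjective _ _) x
    obtain ⟨a, rfl⟩ := (decompose 𝒜).surjective x
    rw [coe_lmap, Ideal.Quotient.eq_zero_iff_mem] at hx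
    exact DFinsupp.ext fun i ↦ Subtype.ext <| Ideal.Quotient.eq_zero_iff_mem.2 (hI i hx)
  · obtain ⟨a, rfl⟩ := Ideal.Quotient.mk_surjective x
    exact ⟨_, coe_lmap a⟩

/-- The grading of the quotient of a graded algebra by a homogeneous ideal. -/
@[reducible]
noncomputable def quotientGradedAlgebra (hI : I.IsHomogeneous 𝒜) :
    GradedAlgebra (quotientGrading 𝒜 I) where
  one_mem := ⟨1, SetLike.GradedOne.one_mem, map_one (Ideal.Quotient.mk I)⟩
  mul_mem := by
    rintro i j _ _ ⟨x, hx, rfl⟩ ⟨y, hy, rfl⟩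
    exact ⟨x * y, SetLike.GradedMul.mul_mem hx hy, map_mul (Ideal.Quotient.mk I) x y⟩
  toDecomposition := (isInternal_quotientGrading 𝒜 hI).chooseDecomposition

end QuotientGrading

section SymbolIdeal

open DirectSum Module

lemma nonempty_map_equiv_map {𝕜 M N P : Type*} [Ring 𝕜] [AddCommGroup M] [AddCommGroup N]
    [AddCommGroup P] [Module 𝕜 M] [Module 𝕜 N] [Module 𝕜 P] {f : M →ₗ[𝕜] N} {g : M →ₗ[𝕜] P}
    {p : Submodule 𝕜 M} (h : ∀ x ∈ p, f x = 0 ↔ g x = 0) : Nonempty (p.map f ≃ₗ[𝕜] p.map g) := by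
  have ker_eq : LinearMap.ker (f.domRestrict p) = LinearMap.ker (g.domRestrict p) :=
    Submodule.ext fun x ↦ h x x.2
  rw [← LinearMap.range_domRestrict, ← LinearMap.range_domRestrict]
  exact ⟨(f.domRestrict p).quotKerEquivRange.symm ≪≫ₗ Submodule.quotEquivOfEq _ _ ker_eq ≪≫ₗ
    (g.domRestrict p).quotKerEquivRange⟩

variable {𝕜 R B : Type*} [Field 𝕜] [CommRing R] [Algebra 𝕜 R] [CommRing B] [Algebra 𝕜 B]
  (𝒜 : ℕ → Submodule 𝕜 R) [GradedAlgebra 𝒜] (φ : R →ₐ[𝕜] B) (W : Submodule 𝕜 B)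

/-- The filtration `⊥, W ^ 0, W ^ 1, …`, so that `W ^ j ⧸ shiftedPow W j` is the degree `j` part of
the associated graded algebra when `1 ∈ W`. -/
def shiftedPow : ℕ → Submodule 𝕜 B
  | 0 => ⊥
  | j + 1 => W ^ j

variable {W} in
lemma mul_mem_shiftedPow {i j : ℕ} {x y : B} (hx : x ∈ W ^ i) (hy : y ∈ shiftedPow W j) :
    x * y ∈ shiftedPow W (i + j) := by
  cases j with
  | zero =>
    rw [shiftedPow, Submodule.mem_bot] at hy
    simp [hy]
  | succ j =>
    rw [← add_assoc, shiftedPow, pow_add]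
    exact Submodule.mul_mem_mul hx hy

variable {𝒜 φ W}

/-- The ideal of elements of `R` whose symbols in the associated graded algebra of the filtration
`W ^ 0 ≤ W ^ 1 ≤ …` vanish: the `j`-th homogeneous component is mapped to `W ^ (j - 1)`. -/
def symbolIdeal (h𝒜 : ∀ j, (𝒜 j).map φ.toLinearMap = W ^ j) : Ideal R where
  carrier := {p | ∀ j, φ (decompose 𝒜 p j) ∈ shiftedPow W j}
  zero_mem' j := by simp
  add_mem' hp hq j := by simpa using add_mem (hp j) (hq j)
  smul_mem' a p hp j := by
    induction a using Decomposition.inductionOn 𝒜 with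
    | zero => simp
    | @homogeneous i a =>
      rw [smul_eq_mul, coe_decompose_mul_of_left_mem 𝒜 j a.2]
      split_ifs with hij
      · rw [map_mul]
        have := mul_mem_shiftedPow (h𝒜 i ▸ Submodule.mem_map_of_mem a.2) (hp (j - i))
        rwa [Nat.add_sub_cancel' hij] at this
      · simp
    | add a b ha hb => simpa [add_mul] using add_mem ha hb

variable (h𝒜 : ∀ j, (𝒜 j).map φ.toLinearMap = W ^ j)

lemma mem_symbolIdeal_of_mem {j : ℕ} {p : R} (hp : p ∈ 𝒜 j) :
    p ∈ symbolIdeal h𝒜 ↔ φ p ∈ shiftedPow W j := by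
  refine ⟨fun h ↦ by simpa [decompose_of_mem_same 𝒜 hp] using h j, fun h i ↦ ?_⟩
  obtain rfl | hij := eq_or_ne j i
  · rwa [decompose_of_mem_same 𝒜 hp]
  · simp [decompose_of_mem_ne 𝒜 hp hij]

lemma isHomogeneous_symbolIdeal : (symbolIdeal h𝒜).IsHomogeneous 𝒜 := fun i _ hp ↦
  (mem_symbolIdeal_of_mem h𝒜 (SetLike.coe_mem _)).2 (hp i)

lemma nonempty_equiv_quotientGrading_symbolIdeal (j : ℕ) :
    Nonempty (quotientGrading 𝒜 (symbolIdeal h𝒜) j ≃ₗ[𝕜] (W ^ j).map (shiftedPow W j).mkQ) := by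
  rw [quotientGrading, ← h𝒜 j, ← Submodule.map_comp]
  refine nonempty_map_equiv_map fun p hp ↦ ?_
  simpa [Ideal.Quotient.eq_zero_iff_mem] using mem_symbolIdeal_of_mem h𝒜 hp

variable [FiniteDimensional 𝕜 B]

instance finite_quotientGrading_symbolIdeal (j : ℕ) :
    Module.Finite 𝕜 (quotientGrading 𝒜 (symbolIdeal h𝒜) j) :=
  have ⟨e⟩ := nonempty_equiv_quotientGrading_symbolIdeal h𝒜 j
  .equiv e.symm

lemma finrank_quotientGrading_symbolIdeal_add (hW : 1 ≤ W) (j : ℕ) :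
    finrank 𝕜 (quotientGrading 𝒜 (symbolIdeal h𝒜) j) + finrank 𝕜 (shiftedPow W j) =
      finrank 𝕜 ↥(W ^ j) := by
  have shiftedPow_le : shiftedPow W j ≤ W ^ j := by
    cases j with
    | zero => exact bot_le
    | succ j => exact pow_le_pow_right₀ hW j.le_succ
  obtain ⟨e⟩ := nonempty_equiv_quotientGrading_symbolIdeal h𝒜 j
  rw [e.finrank_eq, ← ((shiftedPow W j).mkQ.domRestrict (W ^ j)).finrank_range_add_finrank_ker,
    LinearMap.range_domRestrict, LinearMap.ker_domRestrict, Submodule.ker_mkQ,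
    (Submodule.comapSubtypeEquivOfLe shiftedPow_le).finrank_eq]

lemma finrank_quotientGrading_symbolIdeal (hW : 1 ≤ W) {d : ℕ} (hWd : W ^ d = ⊤) {h : ℕ → ℚ}
    (hh : ∀ j ≤ d, (finrank 𝕜 ↥(W ^ j) : ℚ) = ∑ i ∈ range (j + 1), h i) (j : ℕ) :
    (finrank 𝕜 (quotientGrading 𝒜 (symbolIdeal h𝒜) j) : ℚ) = if j ≤ d then h j else 0 := by
  have pow_eq_top (i : ℕ) (hi : d ≤ i) : W ^ i = ⊤ :=
    top_le_iff.1 (hWd ▸ pow_le_pow_right₀ hW hi)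
  have key : (finrank 𝕜 (quotientGrading 𝒜 (symbolIdeal h𝒜) j) + finrank 𝕜 (shiftedPow W j) : ℚ) =
      finrank 𝕜 ↥(W ^ j) := by
    exact_mod_cast finrank_quotientGrading_symbolIdeal_add h𝒜 hW j
  cases j with
  | zero =>
    rw [shiftedPow, finrank_bot 𝕜 B, hh 0 d.zero_le] at key
    simpa using key
  | succ j =>
    rw [shiftedPow] at key
    split_ifs with hj
    · rw [hh _ hj, hh j (by lia), sum_range_succ _ (j + 1)] at key
      linarith
    · rw [pow_eq_top j (by lia), pow_eq_top (j + 1) (by lia)] at key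
      linarith

end SymbolIdeal

section Macaulay

open MvPolynomial Module

attribute [local instance] MvPolynomial.gradedAlgebra

lemma finite_of_iSup_eq_top {ι 𝕜 M : Type*} [Semiring 𝕜] [AddCommMonoid M] [Module 𝕜 M]
    {𝒜 : ι → Submodule 𝕜 M} [∀ i, Module.Finite 𝕜 (𝒜 i)] (h : ⨆ i, 𝒜 i = ⊤) {s : Finset ι}
    (hs : ∀ i ∉ s, 𝒜 i = ⊥) : Module.Finite 𝕜 M := by
  have iSup_mem_eq_top : ⨆ i ∈ s, 𝒜 i = ⊤ := by
    refine h ▸ iSup_congr fun i ↦ ?_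
    by_cases hi : i ∈ s <;> simp [hi, hs]
  exact ⟨iSup_mem_eq_top ▸ Submodule.fg_biSup _ _ fun i _ ↦ Module.Finite.iff_fg.1 inferInstance⟩

lemma map_aeval_homogeneousSubmodule {σ 𝕜 B : Type*} [CommSemiring 𝕜] [CommSemiring B]
    [Algebra 𝕜 B] (x : σ → B) (j : ℕ) :
    (homogeneousSubmodule σ 𝕜 j).map (MvPolynomial.aeval x).toLinearMap =
      Submodule.span 𝕜 (Set.range x) ^ j := by
  rw [← homogeneousSubmodule_one_pow, Submodule.map_pow, homogeneousSubmodule_one_eq_span_X,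
    Submodule.map_span, ← Set.range_comp]
  congr! 4
  exact funext fun i ↦ MvPolynomial.aeval_X x i

lemma adjoin_quotientGrading_one {σ 𝕜 : Type*} [CommRing 𝕜] (I : Ideal (MvPolynomial σ 𝕜)) :
    Algebra.adjoin 𝕜 (quotientGrading (homogeneousSubmodule σ 𝕜) I 1 : Set (_ ⧸ I)) = ⊤ := by
  rw [quotientGrading, Submodule.map_coe, AlgHom.coe_toLinearMap, ← AlgHom.map_adjoin,
    ← (AlgHom.range_eq_top _).2 (Ideal.Quotient.mkₐ_surjective 𝕜 I), ← Algebra.map_top]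
  congr 1
  rw [eq_top_iff, ← adjoin_range_X]
  exact Algebra.adjoin_mono (Set.range_subset_iff.2 fun i ↦ isHomogeneous_X 𝕜 i)

theorem isMacaulayVector_of_finrank_pow {𝕜 : Type} {B : Type*} [Field 𝕜] [CommRing B] [Algebra 𝕜 B]
    [FiniteDimensional 𝕜 B] {W : Submodule 𝕜 B} (hW : 1 ≤ W) {d : ℕ} (hWd : W ^ d = ⊤) {h : ℕ → ℚ}
    (hh : ∀ j ≤ d, (finrank 𝕜 ↥(W ^ j) : ℚ) = ∑ i ∈ range (j + 1), h i) :
    IsMacaulayVector d h := by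
  obtain ⟨n, x, rfl⟩ := Submodule.fg_iff_exists_fin_generating_family.1 (IsNoetherian.noetherian W)
  have h𝒜 := map_aeval_homogeneousSubmodule (𝕜 := 𝕜) x
  set W := Submodule.span 𝕜 (Set.range x)
  set 𝒜 := quotientGrading (homogeneousSubmodule (Fin n) 𝕜) (symbolIdeal h𝒜)
  have finrank_piece := finrank_quotientGrading_symbolIdeal h𝒜 hW hWd hh
  have gradedAlgebra : GradedAlgebra 𝒜 :=
    quotientGradedAlgebra (homogeneousSubmodule (Fin n) 𝕜) (isHomogeneous_symbolIdeal h𝒜)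
  refine ⟨𝕜, MvPolynomial (Fin n) 𝕜 ⧸ symbolIdeal h𝒜, _, _, _, 𝒜, gradedAlgebra, ?_, ?_,
    adjoin_quotientGrading_one _, fun j ↦ finite_quotientGrading_symbolIdeal h𝒜 j, finrank_piece⟩
  · have piece_eq_bot (j : ℕ) (hj : j ∉ range (d + 1)) : 𝒜 j = ⊥ := by
      rw [← Submodule.finrank_eq_zero (R := 𝕜)]
      exact_mod_cast (finrank_piece j).trans (if_neg (by simpa [Nat.lt_succ_iff] using hj))
    have := finite_of_iSup_eq_top (DirectSum.Decomposition.isInternal 𝒜).submodule_iSup_eq_top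
      piece_eq_bot
    exact IsArtinianRing.of_finite 𝕜 _
  · rintro _ ⟨p, hp, rfl⟩
    rw [SetLike.mem_coe, homogeneousSubmodule_zero, Submodule.mem_one] at hp
    obtain ⟨c, rfl⟩ := hp
    exact ⟨c, rfl⟩

end Macaulay

section Shelling

open Module Submodule

variable {Φ K Y : Type*}

/-- The indicator function of the star of a face of a balanced simplicial complex. The facets are
indexed by `Φ`, the vertex of color `r` of the facet `w` is `c w r`, and the face consists of the
vertices of `w` with colors in `T`. -/
noncomputable def starIndicator (c : Φ → K → Y) (w : Φ) (T : Finset K) : Φ → ℚ :=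
  Set.indicator {x | Set.EqOn (c w) (c x) T} 1

/-- The order on the facets is a shelling of the balanced complex `c` with restriction sets `D`: a
facet is the first one containing its face of colors `T` exactly when `T` contains `D w`. -/
def IsShelling [LE Φ] (c : Φ → K → Y) (D : Φ → Finset K) : Prop :=
  ∀ w (T : Finset K), (∀ x, Set.EqOn (c w) (c x) T → w ≤ x) ↔ D w ⊆ T

/-- The span of the star indicators of faces with at most `j` vertices. -/
noncomputable def starSpan (c : Φ → K → Y) (j : ℕ) : Submodule ℚ (Φ → ℚ) :=
  span ℚ {f | ∃ w T, #T ≤ j ∧ starIndicator c w T = f}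

lemma starIndicator_apply (c : Φ → K → Y) (w : Φ) (T : Finset K) (x : Φ)
    [Decidable (Set.EqOn (c w) (c x) T)] :
    starIndicator c w T x = if Set.EqOn (c w) (c x) T then 1 else 0 := by
  rw [starIndicator, Set.indicator_apply]
  rfl

lemma starIndicator_congr {c : Φ → K → Y} {w x : Φ} {T : Finset K} (h : Set.EqOn (c w) (c x) T) :
    starIndicator c w T = starIndicator c x T := by
  have star_eq : {y | Set.EqOn (c w) (c y) T} = {y | Set.EqOn (c x) (c y) T} :=
    Set.ext fun y ↦ ⟨h.symm.trans, h.trans⟩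
  rw [starIndicator, starIndicator, star_eq]

lemma starIndicator_union [DecidableEq K] (c : Φ → K → Y) (w : Φ) (S T : Finset K) :
    starIndicator c w (S ∪ T) = starIndicator c w S * starIndicator c w T := by
  simp only [starIndicator, coe_union, Set.eqOn_union, ← Set.inter_indicator_one]
  rfl

lemma starIndicator_mem_starSpan (c : Φ → K → Y) (w : Φ) {T : Finset K} {j : ℕ} (h : #T ≤ j) :
    starIndicator c w T ∈ starSpan c j :=
  subset_span ⟨w, T, h, rfl⟩

lemma one_le_starSpan [Nonempty Φ] (c : Φ → K → Y) (j : ℕ) : 1 ≤ starSpan c j := by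
  obtain ⟨w⟩ := ‹Nonempty Φ›
  rw [Submodule.one_le]
  simpa [starIndicator] using! starIndicator_mem_starSpan c w (T := ∅) j.zero_le

lemma starSpan_mul_le (c : Φ → K → Y) (i j : ℕ) :
    starSpan c i * starSpan c j ≤ starSpan c (i + j) := by
  classical
  rw [starSpan, starSpan, span_mul_span, span_le]
  rintro _ ⟨_, ⟨w, S, hS, rfl⟩, _, ⟨x, T, hT, rfl⟩, rfl⟩
  beta_reduce
  by_cases common_facet : ∃ y, Set.EqOn (c w) (c y) S ∧ Set.EqOn (c x) (c y) T
  · obtain ⟨y, hwy, hxy⟩ := common_facet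
    rw [starIndicator_congr hwy, starIndicator_congr hxy, ← starIndicator_union]
    exact starIndicator_mem_starSpan c y ((card_union_le S T).trans (add_le_add hS hT))
  · suffices starIndicator c w S * starIndicator c x T = 0 from this ▸ zero_mem _
    by_contra! h
    obtain ⟨y, hy⟩ := Function.ne_iff.1 h
    obtain ⟨hwy, hxy⟩ := mul_ne_zero_iff.1 hy
    exact common_facet ⟨y, Set.mem_of_indicator_ne_zero hwy, Set.mem_of_indicator_ne_zero hxy⟩

lemma starIndicator_mem_starSpan_pow [Nonempty Φ] (c : Φ → K → Y) (w : Φ) (T : Finset K) :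
    starIndicator c w T ∈ starSpan c 1 ^ #T := by
  classical
  induction T using Finset.induction_on with
  | empty => simp [starIndicator]
  | insert r T hr ih =>
    rw [card_insert_of_notMem hr, insert_eq, starIndicator_union, pow_succ']
    exact mul_mem_mul (starIndicator_mem_starSpan c w (card_singleton r).le) ih

lemma starSpan_eq_pow [Nonempty Φ] (c : Φ → K → Y) (j : ℕ) : starSpan c j = starSpan c 1 ^ j := by
  apply le_antisymm
  · refine span_le.2 ?_
    rintro _ ⟨w, T, hT, rfl⟩
    exact pow_le_pow_right₀ (one_le_starSpan c 1) hT (starIndicator_mem_starSpan_pow c w T)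
  · induction j with
    | zero => exact one_le_starSpan c 0
    | succ j ih =>
      rw [pow_succ]
      exact (mul_le_mul_left ih _).trans (starSpan_mul_le c j 1)

variable [LinearOrder Φ] {c : Φ → K → Y} {D : Φ → Finset K}

lemma exists_first_facet [Finite Φ] (c : Φ → K → Y) (T : Finset K) (w : Φ) :
    ∃ u, Set.EqOn (c w) (c u) T ∧ ∀ x, Set.EqOn (c u) (c x) T → u ≤ x := by
  obtain ⟨u, hwu, hu⟩ := wellFounded_lt.has_min {u | Set.EqOn (c w) (c u) T} ⟨w, Set.eqOn_refl _ _⟩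
  exact ⟨u, hwu, fun x hux ↦ not_lt.1 (hu x (Set.EqOn.trans hwu hux))⟩

lemma IsShelling.existsUnique [Finite Φ] (hD : IsShelling c D) (T : Finset K) (w : Φ) :
    ∃! u, Set.EqOn (c u) (c w) T ∧ D u ⊆ T := by
  obtain ⟨u, hwu, hu⟩ := exists_first_facet c T w
  refine ⟨u, ⟨hwu.symm, (hD u T).1 hu⟩, fun x ⟨hxw, hx⟩ ↦ le_antisymm ?_ ?_⟩
  · exact (hD x T).2 hx u (hxw.trans hwu)
  · exact hu x (hwu.symm.trans hxw.symm)

lemma IsShelling.linearIndependent [Finite Φ] (hD : IsShelling c D) :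
    LinearIndependent ℚ fun w ↦ starIndicator c w (D w) := by
  have := Fintype.ofFinite Φ
  rw [Fintype.linearIndependent_iff]
  intro g hg w
  induction w using WellFoundedLT.induction with
  | ind w ih =>
    have eval_at_w := congrFun hg w
    rw [Finset.sum_apply, sum_eq_single w] at eval_at_w
    · simpa [starIndicator, Set.eqOn_refl] using eval_at_w
    · intro x _ hxw
      obtain hlt | hlt := hxw.lt_or_gt
      · simp [ih x hlt]
      · have : ¬ Set.EqOn (c x) (c w) (D x) := fun h ↦ ((hD x _).2 subset_rfl w h).not_gt hlt
        simp [starIndicator, this]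
    · simp

lemma IsShelling.finrank_span [Finite Φ] (hD : IsShelling c D) (s : Set Φ) [Fintype s] :
    finrank ℚ (span ℚ ((fun w ↦ starIndicator c w (D w)) '' s)) = Fintype.card s := by
  rw [Set.image_eq_range]
  exact finrank_span_eq_card (hD.linearIndependent.comp _ Subtype.val_injective)

open Classical in
lemma IsShelling.starIndicator_eq_sum [Fintype Φ] (hD : IsShelling c D) {S T : Finset K}
    (hST : S ⊆ T) (w : Φ) :
    starIndicator c w S =
      ∑ u with D u ⊆ T ∧ Set.EqOn (c w) (c u) S, starIndicator c u T := by
  ext x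
  obtain ⟨u, ⟨hux, hu⟩, u_unique⟩ := hD.existsUnique T x
  have eqOn_iff : Set.EqOn (c w) (c x) S ↔ Set.EqOn (c w) (c u) S :=
    have hux := hux.mono (coe_subset.2 hST)
    ⟨fun h ↦ h.trans hux.symm, fun h ↦ h.trans hux⟩
  have eval_at_x (y : Φ) (hy : D y ⊆ T) : starIndicator c y T x = if u = y then 1 else 0 := by
    have mem_star_iff : Set.EqOn (c y) (c x) T ↔ u = y :=
      ⟨fun h ↦ (u_unique y ⟨h, hy⟩).symm, fun h ↦ h ▸ hux⟩
    simp only [starIndicator_apply, mem_star_iff]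
  rw [Finset.sum_apply, sum_congr rfl fun y hy ↦ eval_at_x y (mem_filter.1 hy).2.1, sum_ite_eq]
  simp [starIndicator_apply, eqOn_iff, hu]

lemma IsShelling.span_starIndicator_eq [Finite Φ] (hD : IsShelling c D) (T : Finset K) :
    span ℚ ((fun w ↦ starIndicator c w (D w)) '' {w | D w ⊆ T}) =
      span ℚ ((fun w ↦ starIndicator c w T) '' {w | D w ⊆ T}) := by
  classical
  have := Fintype.ofFinite Φ
  apply eq_of_le_of_finrank_le
  · rw [span_le]
    rintro _ ⟨w, hw, rfl⟩
    beta_reduce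
    rw [hD.starIndicator_eq_sum hw]
    exact sum_mem fun u hu ↦ subset_span ⟨u, (mem_filter.1 hu).2.1, rfl⟩
  · rw [hD.finrank_span, Set.image_eq_range]
    exact finrank_range_le_card _

lemma IsShelling.starSpan_eq_span [Finite Φ] (hD : IsShelling c D) (j : ℕ) :
    starSpan c j = span ℚ ((fun w ↦ starIndicator c w (D w)) '' {w | #(D w) ≤ j}) := by
  classical
  apply le_antisymm
  · refine span_le.2 ?_
    rintro _ ⟨w, T, hT, rfl⟩
    obtain ⟨u, ⟨huw, hu⟩, -⟩ := hD.existsUnique T w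
    rw [← starIndicator_congr huw]
    have mem_span : starIndicator c u T ∈ span ℚ ((fun w ↦ starIndicator c w T) '' {w | D w ⊆ T}) :=
      subset_span ⟨u, hu, rfl⟩
    rw [← hD.span_starIndicator_eq] at mem_span
    exact span_mono (Set.image_mono fun x hx ↦ (card_le_card hx).trans hT) mem_span
  · refine span_le.2 ?_
    rintro _ ⟨w, hw, rfl⟩
    exact starIndicator_mem_starSpan c w hw

theorem IsShelling.finrank_starSpan [Fintype Φ] (hD : IsShelling c D) (j : ℕ) :
    finrank ℚ (starSpan c j) = #{w | #(D w) ≤ j} := by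
  rw [hD.starSpan_eq_span, hD.finrank_span]
  exact Fintype.card_subtype _

theorem IsShelling.isMacaulayVector [Fintype Φ] [Nonempty Φ] [Fintype K] (hD : IsShelling c D)
    {h : ℕ → ℚ} (hh : ∀ j ≤ Fintype.card K, h j = #{w | #(D w) = j}) :
    IsMacaulayVector (Fintype.card K) h := by
  refine isMacaulayVector_of_finrank_pow (one_le_starSpan c 1) ?_ fun j hj ↦ ?_
  · rw [← starSpan_eq_pow, eq_top_iff,
      ← hD.linearIndependent.span_eq_top_of_card_eq_finrank' (finrank_fintype_fun_eq_card ℚ).symm,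
      span_le]
    rintro _ ⟨w, rfl⟩
    exact starIndicator_mem_starSpan c w (card_le_univ _)
  · rw [← starSpan_eq_pow, hD.finrank_starSpan]
    have card_eq_sum := card_eq_sum_card_fiberwise (s := {w | #(D w) ≤ j}) (t := range (j + 1))
      (f := fun w ↦ #(D w)) fun w hw ↦ by simpa [Nat.lt_succ_iff] using hw
    rw [card_eq_sum, Nat.cast_sum]
    refine sum_congr rfl fun i hi ↦ ?_
    have hij : i ≤ j := Nat.lt_succ_iff.1 (mem_range.1 hi)
    rw [hh i (hij.trans hj), filter_filter]
    congr! 3 with w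
    exact and_iff_right_of_imp fun h ↦ (h.trans_le hij : #(D w) ≤ j)

end Shelling

/-- The set of independent vectors of a discrete polymatroid of rank `d`: a lower set all of whose
elements have sum at most `d`, containing bases, that is, elements of sum `d`, and having the
exchange property. -/
structure IsDiscretePolymatroid {ι : Type*} [Fintype ι] [DecidableEq ι]
    (P : Set (ι → ℕ)) (d : ℕ) : Prop where
  isLowerSet : IsLowerSet P
  sum_le : ∀ v ∈ P, ∑ i, v i ≤ d
  exists_basis : ∃ b ∈ P, ∑ i, b i = d
  exchange : ∀ b ∈ P, ∑ i, b i = d → ∀ v ∈ P, ∀ j, b j < v j →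
    ∃ i, v i < b i ∧ ∃ b' ∈ P, b' + Pi.single i 1 = b + Pi.single j 1

lemma IsDiscretePolymatroid.zero_mem {ι : Type*} [Fintype ι] [DecidableEq ι] {P : Set (ι → ℕ)}
    {d : ℕ} (hP : IsDiscretePolymatroid P d) : 0 ∈ P := by
  obtain ⟨b, hb, -⟩ := hP.exists_basis
  exact hP.isLowerSet (fun _ ↦ Nat.zero_le _) hb

section Words

variable {ι : Type*}

/-- The vector counting the occurrences of each letter in a word. -/
def letterCount [DecidableEq ι] (l : List ι) : ι → ℕ := fun i ↦ l.count i

section LetterCount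

variable [DecidableEq ι]

lemma letterCount_eq_iff_perm {l l' : List ι} : letterCount l = letterCount l' ↔ l.Perm l' := by
  rw [List.perm_iff_count]
  exact funext_iff

lemma letterCount_append (l l' : List ι) : letterCount (l ++ l') = letterCount l + letterCount l' :=
  funext fun _ ↦ List.count_append

lemma letterCount_singleton (i : ι) : letterCount [i] = Pi.single i 1 := by
  ext j
  simp [letterCount, Pi.single_apply, List.count_singleton, eq_comm (a := i)]

lemma sum_letterCount [Fintype ι] (l : List ι) : ∑ i, letterCount l i = l.length := by
  simpa [letterCount] using
    Multiset.sum_count_eq_card (s := univ) (m := (l : Multiset ι)) fun _ _ ↦ mem_univ _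

lemma letterCount_mono {l l' : List ι} (h : l.Sublist l') : letterCount l ≤ letterCount l' :=
  fun i ↦ h.count_le i

lemma mem_drop_of_letterCount_lt {l l' : List ι} {n : ℕ} {i : ι}
    (same_prefix : letterCount (l.take n) = letterCount (l'.take n))
    (hi : letterCount l' i < letterCount l i) : i ∈ l.drop n := by
  by_contra not_mem
  have count_eq : letterCount l i = letterCount (l.take n) i := by
    conv_lhs => rw [← List.take_append_drop n l, letterCount_append]
    simp [letterCount, List.count_eq_zero_of_not_mem not_mem]
  rw [count_eq, same_prefix] at hi
  exact (letterCount_mono (List.take_sublist n l') i).not_gt hi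

lemma exists_last_common_prefix (l l' : List ι) (d : ℕ) :
    ∃ s, letterCount (l.take s) = letterCount (l'.take s) ∧
      ∀ u, s < u → u ≤ d → letterCount (l.take u) ≠ letterCount (l'.take u) := by
  classical
  let Common (s : ℕ) : Prop := letterCount (l.take s) = letterCount (l'.take s)
  exact ⟨Nat.findGreatest Common d,
    Nat.findGreatest_spec (P := Common) d.zero_le (by simp [Common]),
    fun _ ↦ Nat.findGreatest_is_greatest⟩

end LetterCount

lemma exists_descent_of_not_pairwise {K : Type*} [LinearOrder K] {key : ι → K} {l : List ι}
    (h : ¬ l.Pairwise (key · ≤ key ·)) :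
    ∃ l₁ x y l₂, l = l₁ ++ x :: y :: l₂ ∧ key y < key x := by
  have : IsTrans ι (key · ≤ key ·) := ⟨fun _ _ _ ↦ le_trans⟩
  rw [← List.isChain_iff_pairwise, List.isChain_iff_forall_rel_of_append_cons_cons] at h
  push Not at h
  obtain ⟨x, y, l₁, l₂, hl, hxy⟩ := h
  exact ⟨l₁, x, y, l₂, hl, hxy⟩

lemma take_append_swap_perm (l₁ l₂ : List ι) (x y : ι) {n : ℕ} (hn : n ≠ l₁.length + 1) :
    ((l₁ ++ x :: y :: l₂).take n).Perm ((l₁ ++ y :: x :: l₂).take n) := by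
  rw [List.take_append, List.take_append]
  refine List.Perm.append_left _ ?_
  match h : n - l₁.length with
  | 0 => simp
  | 1 => omega
  | k + 2 => exact List.Perm.swap y x _

variable [LinearOrder ι]

/-- A letter `i` is passive for the basis `b` if replacing one of its occurrences by some smaller
letter gives another element of `P`. -/
def IsPassive (P : Set (ι → ℕ)) (b : ι → ℕ) (i : ι) : Prop :=
  ∃ j < i, ∃ b' ∈ P, b' + Pi.single i 1 = b + Pi.single j 1

open Classical in
/-- The order on the letters of the words with content `b`: the passive letters come last. -/
noncomputable def letterKey (P : Set (ι → ℕ)) (b : ι → ℕ) (i : ι) : Bool ×ₗ ι :=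
  toLex (decide (IsPassive P b i), i)

lemma letterKey_injective (P : Set (ι → ℕ)) (b : ι → ℕ) : Function.Injective (letterKey P b) :=
  fun _ _ h ↦ congrArg (fun z ↦ (ofLex z).2) h

lemma letterKey_lt_letterKey {P : Set (ι → ℕ)} {b : ι → ℕ} {i j : ι} (hi : ¬ IsPassive P b i)
    (hj : IsPassive P b j) : letterKey P b i < letterKey P b j := by
  simp [letterKey, Prod.Lex.toLex_lt_toLex, hi, hj]

/-- The words of length `d` with content in `P`. When `P` is a discrete polymatroid of rank `d`,
such a word records the steps of a maximal chain in `P`. -/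
@[ext]
structure BasisWord (P : Set (ι → ℕ)) (d : ℕ) where
  val : List ι
  letterCount_mem : letterCount val ∈ P
  length_eq : val.length = d

namespace BasisWord

variable {P : Set (ι → ℕ)} {d : ℕ}

/-- Words are first compared by their contents, in reverse lexicographic order, and then
lexicographically with respect to `letterKey`. -/
noncomputable def sortKey (w : BasisWord P d) : (Lex (ι → ℕ))ᵒᵈ ×ₗ List (Bool ×ₗ ι) :=
  toLex (OrderDual.toDual (toLex (letterCount w.val)), w.val.map (letterKey P (letterCount w.val)))

lemma sortKey_injective : Function.Injective (sortKey (P := P) (d := d)) := by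
  intro w w' h
  have same_content : letterCount w.val = letterCount w'.val := congrArg (fun z ↦ (ofLex z).1) h
  have same_letters : w.val.map (letterKey P (letterCount w.val)) =
    w'.val.map (letterKey P (letterCount w'.val)) := congrArg (fun z ↦ (ofLex z).2) h
  rw [← same_content] at same_letters
  exact BasisWord.ext ((letterKey_injective P _).list_map same_letters)

noncomputable instance [Finite ι] : Fintype (BasisWord P d) :=
  have : Finite {l : List ι // l.length = d} := List.finite_length_eq ι d
  have := Finite.of_injective
    (fun w : BasisWord P d ↦ (⟨w.val, w.length_eq⟩ : {l : List ι // l.length = d}))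
    fun _ _ h ↦ BasisWord.ext (Subtype.ext_iff.1 h)
  Fintype.ofFinite _

/-- The set of vectors in the maximal chain of a word; its element of color `r` has sum `r + 1`. -/
def chain (w : BasisWord P d) (r : Fin d) : ι → ℕ :=
  letterCount (w.val.take (r + 1))

section Order

variable [Finite ι]

noncomputable instance : LinearOrder (BasisWord P d) :=
  LinearOrder.lift' sortKey sortKey_injective

lemma lt_iff {w w' : BasisWord P d} :
    w < w' ↔ toLex (letterCount w'.val) < toLex (letterCount w.val) ∨
      letterCount w.val = letterCount w'.val ∧
        w.val.map (letterKey P (letterCount w.val)) <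
          w'.val.map (letterKey P (letterCount w'.val)) :=
  Prod.Lex.toLex_lt_toLex

open Classical in
/-- The colors in which the chain of `w` can be changed to give the chain of a smaller word. -/
noncomputable def restriction (w : BasisWord P d) : Finset (Fin d) :=
  {r | ∃ w' < w, Set.EqOn w.chain w'.chain {r}ᶜ}

lemma mem_restriction {w : BasisWord P d} {r : Fin d} :
    r ∈ w.restriction ↔ ∃ w' < w, Set.EqOn w.chain w'.chain {r}ᶜ := by
  simp [restriction]

lemma mem_restriction_of_descent {w : BasisWord P d} {l₁ l₂ : List ι} {x y : ι}
    (hw : w.val = l₁ ++ x :: y :: l₂)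
    (hxy : letterKey P (letterCount w.val) y < letterKey P (letterCount w.val) x)
    (hr : l₁.length < d) : ⟨l₁.length, hr⟩ ∈ w.restriction := by
  have perm : (l₁ ++ y :: x :: l₂).Perm w.val := hw ▸ (List.Perm.swap x y l₂).append_left l₁
  have same_count := letterCount_eq_iff_perm.2 perm
  let w' : BasisWord P d :=
    ⟨l₁ ++ y :: x :: l₂, same_count ▸ w.letterCount_mem, perm.length_eq.trans w.length_eq⟩
  refine mem_restriction.2 ⟨w', lt_iff.2 (.inr ⟨same_count, ?_⟩), fun r' hr' ↦ ?_⟩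
  · rw [same_count]
    generalize letterKey P (letterCount w.val) = key at hxy
    simp only [hw, w', List.map_append, List.map_cons]
    exact List.append_left_lt (List.cons_lt_cons_iff.2 (.inl hxy))
  · refine letterCount_eq_iff_perm.2 (hw ▸ take_append_swap_perm l₁ l₂ x y fun h ↦ hr' ?_)
    exact Fin.ext (Nat.succ_injective h)

lemma mem_restriction_of_isPassive {w : BasisWord P d} {l : List ι} {i : ι}
    (hw : w.val = l ++ [i]) (hi : IsPassive P (letterCount w.val) i) (hr : l.length < d) :
    ⟨l.length, hr⟩ ∈ w.restriction := by
  obtain ⟨j, hji, b, hb, exchange⟩ := hi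
  rw [hw, letterCount_append, letterCount_singleton, add_right_comm, add_left_inj,
    ← letterCount_singleton, ← letterCount_append] at exchange
  have length_eq : (l ++ [j]).length = d := by simpa [hw] using w.length_eq
  let w' : BasisWord P d := ⟨l ++ [j], exchange ▸ hb, length_eq⟩
  refine mem_restriction.2 ⟨w', lt_iff.2 (.inl ⟨j, fun x hx ↦ ?_, ?_⟩), fun r' hr' ↦ ?_⟩
  · simp [w', hw, letterCount_append, letterCount_singleton, hx.ne, (hx.trans hji).ne]
  · simp [w', hw, letterCount_append, letterCount_singleton, hji.ne]
  · have hr'_lt : (r' : ℕ) + 1 ≤ l.length := by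
      have hne : (r' : ℕ) ≠ l.length := fun h ↦ hr' (Fin.ext h)
      have := r'.is_lt
      simp only [List.length_append, List.length_singleton] at length_eq
      omega
    simp [chain, w', hw, List.take_append_of_le_length hr'_lt]

lemma exists_chain_ne_of_not_pairwise {w w' : BasisWord P d} {s t : ℕ}
    (not_sorted : ¬ ((w.val.take t).drop s).Pairwise
      (letterKey P (letterCount w.val) · ≤ letterKey P (letterCount w.val) ·))
    (hne : ∀ u, s < u → u < t → letterCount (w.val.take u) ≠ letterCount (w'.val.take u)) :
    ∃ r ∈ w.restriction, w.chain r ≠ w'.chain r := by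
  obtain ⟨l₁, x, y, l₂, block_eq, hxy⟩ := exists_descent_of_not_pairwise not_sorted
  have lengths := congrArg List.length block_eq
  simp only [List.length_drop, List.length_take, w.length_eq, List.length_append,
    List.length_cons] at lengths
  have length_prefix : (w.val.take s ++ l₁).length = s + l₁.length := by
    simp only [List.length_append, List.length_take, w.length_eq]
    omega
  have hr : (w.val.take s ++ l₁).length < d := by omega
  have hw : w.val = (w.val.take s ++ l₁) ++ x :: y :: (l₂ ++ w.val.drop t) := by
    have split : w.val = (w.val.take t).take s ++ (w.val.take t).drop s ++ w.val.drop t := by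
      simp only [List.take_append_drop]
    rw [block_eq, List.take_take, min_eq_left (by omega)] at split
    simpa using split
  exact ⟨_, mem_restriction_of_descent hw hxy hr, hne _ (by simp only; omega) (by simp only; omega)⟩

lemma exists_chain_ne_of_map_lt_map {w w' : BasisWord P d}
    (same_count : letterCount w'.val = letterCount w.val)
    (hlt : w'.val.map (letterKey P (letterCount w.val)) <
      w.val.map (letterKey P (letterCount w.val))) :
    ∃ r ∈ w.restriction, w.chain r ≠ w'.chain r := by
  classical
  have hw := w.length_eq
  have hw' := w'.length_eq
  obtain ⟨-, length_lt⟩ | ⟨s, hs', hs, same_before, key_lt⟩ := List.lt_iff_exists.1 hlt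
  · simp [hw, hw'] at length_lt
  simp only [List.length_map, List.getElem_map] at hs hs' same_before key_lt
  have same_prefix : w.val.take s = w'.val.take s := by
    refine List.ext_getElem (by simp [hw, hw']) fun i hi _ ↦ ?_
    simp only [List.length_take, lt_min_iff] at hi
    simpa using (letterKey_injective P _ (same_before i hi.1)).symm
  have ex_common : ∃ t, s < t ∧ letterCount (w.val.take t) = letterCount (w'.val.take t) :=
    ⟨d, hw ▸ hs, by simp [List.take_of_length_le, hw.le, hw'.le, same_count]⟩
  obtain ⟨hst, common⟩ := Nat.find_spec ex_common
  set t := Nat.find ex_common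
  refine exists_chain_ne_of_not_pairwise (s := s) (t := t) (fun sorted ↦ ?_)
    fun u hsu hut h ↦ Nat.find_min ex_common hut ⟨hsu, h⟩
  have same_block : ((w.val.take t).drop s).Perm ((w'.val.take t).drop s) := by
    rw [letterCount_eq_iff_perm, ← List.take_append_drop s (w.val.take t),
      ← List.take_append_drop s (w'.val.take t), List.take_take, List.take_take,
      min_eq_left hst.le, same_prefix] at common
    exact (List.perm_append_left_iff _).1 common
  have mem_block : w'.val[s] ∈ (w.val.take t).drop s := by
    rw [same_block.mem_iff, List.mem_iff_getElem]
    exact ⟨0, by simp [hst, hs'], by simp⟩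
  have block_eq : (w.val.take t).drop s = w.val[s] :: (w.val.take t).drop (s + 1) := by
    rw [List.drop_eq_getElem_cons (by simp [hst, hs]), List.getElem_take]
  rw [block_eq] at sorted mem_block
  obtain h | h := List.mem_cons.1 mem_block
  · exact key_lt.ne (by rw [h])
  · exact (List.rel_of_pairwise_cons sorted h).not_gt key_lt

lemma exists_chain_ne_of_isPassive {w w' : BasisWord P d} {s : ℕ} {i : ι}
    (mem_drop : i ∈ w.val.drop s) (passive : IsPassive P (letterCount w.val) i)
    (hne : ∀ u, s < u → u ≤ d → letterCount (w.val.take u) ≠ letterCount (w'.val.take u)) :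
    ∃ r ∈ w.restriction, w.chain r ≠ w'.chain r := by
  obtain drop_eq | ⟨l, z, drop_eq⟩ := List.eq_nil_or_concat' (w.val.drop s)
  · simp [drop_eq] at mem_drop
  have hw : w.val = (w.val.take s ++ l) ++ [z] := by
    conv_lhs => rw [← List.take_append_drop s w.val, drop_eq, ← List.append_assoc]
  by_cases last_passive : IsPassive P (letterCount w.val) z
  · have lengths := congrArg List.length drop_eq
    have hd : (w.val.take s ++ l).length + 1 = d :=
      (List.length_append.symm.trans (congrArg List.length hw.symm)).trans w.length_eq
    have hs : s < (w.val.take s ++ l).length + 1 := by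
      rw [List.length_drop, w.length_eq, List.length_append, List.length_singleton] at lengths
      rw [List.length_append] at hd ⊢
      omega
    exact ⟨_, mem_restriction_of_isPassive hw last_passive (by omega), hne _ hs hd.le⟩
  · refine exists_chain_ne_of_not_pairwise (s := s) (t := d) (fun sorted ↦ ?_)
      fun u hsu hud ↦ hne u hsu hud.le
    rw [List.take_of_length_le w.length_eq.le, drop_eq, List.pairwise_append] at sorted
    rw [drop_eq, List.mem_append, List.mem_singleton] at mem_drop
    obtain mem_l | rfl := mem_drop
    · exact (sorted.2.2 i mem_l z (by simp)).not_gt (letterKey_lt_letterKey last_passive passive)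
    · exact last_passive passive

end Order

end BasisWord

variable [Fintype ι]

namespace IsDiscretePolymatroid

variable {P : Set (ι → ℕ)} {d : ℕ}

lemma exists_isPassive (hP : IsDiscretePolymatroid P d) {b v : ι → ℕ} (hb : b ∈ P)
    (sum_eq : ∑ i, b i = d) (hv : v ∈ P) (hlt : toLex b < toLex v) :
    ∃ i, v i < b i ∧ IsPassive P b i := by
  obtain ⟨j, same_before, hj⟩ := hlt
  obtain ⟨i, hi, exchange⟩ := hP.exchange b hb sum_eq v hv j hj
  obtain hij | rfl | hji := lt_trichotomy i j
  · exact absurd (same_before i hij) hi.ne'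
  · exact absurd hi hj.not_gt
  · exact ⟨i, hi, j, hji, exchange⟩

lemma exists_chain_ne_of_toLex_lt (hP : IsDiscretePolymatroid P d) {w w' : BasisWord P d}
    (hlt : toLex (letterCount w.val) < toLex (letterCount w'.val)) :
    ∃ r ∈ w.restriction, w.chain r ≠ w'.chain r := by
  obtain ⟨i, hi, passive⟩ := hP.exists_isPassive w.letterCount_mem
    (by rw [sum_letterCount, w.length_eq]) w'.letterCount_mem hlt
  obtain ⟨s, common, hne⟩ := exists_last_common_prefix w.val w'.val d
  exact BasisWord.exists_chain_ne_of_isPassive (mem_drop_of_letterCount_lt common hi) passive hne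

lemma exists_chain_ne (hP : IsDiscretePolymatroid P d) {w w' : BasisWord P d} (hlt : w' < w) :
    ∃ r ∈ w.restriction, w.chain r ≠ w'.chain r := by
  obtain hlt | ⟨same_count, hlt⟩ := BasisWord.lt_iff.1 hlt
  · exact hP.exists_chain_ne_of_toLex_lt hlt
  · exact BasisWord.exists_chain_ne_of_map_lt_map same_count (same_count ▸ hlt)

lemma isShelling (hP : IsDiscretePolymatroid P d) :
    IsShelling (BasisWord.chain (P := P) (d := d)) BasisWord.restriction := by
  refine fun w T ↦ ⟨fun h r hr ↦ ?_, fun h w' hag ↦ ?_⟩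
  · by_contra hrT
    obtain ⟨w', hlt, hag⟩ := BasisWord.mem_restriction.1 hr
    exact (h w' (hag.mono fun r' hr' ↦ ne_of_mem_of_not_mem hr' hrT)).not_gt hlt
  · by_contra! hlt
    obtain ⟨r, hr, hne⟩ := hP.exists_chain_ne hlt
    exact hne (hag (h hr))

end IsDiscretePolymatroid

end Words

section Multichains

section Count

variable {Y : Type*} [DecidableEq Y]

/-- The weakly decreasing lists of length `q` with first element in `A`. When `A` is a lower set,
these are the multichains of length `q` in `A`. -/
def multichains [PartialOrder Y] [LocallyFiniteOrderBot Y] : ℕ → Finset Y → Finset (List Y)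
  | 0, _ => {[]}
  | q + 1, A => A.biUnion fun v ↦ (multichains q (Iic v)).image (List.cons v)

lemma mem_multichains [PartialOrder Y] [LocallyFiniteOrderBot Y] {q : ℕ} {A : Finset Y}
    (hA : IsLowerSet (A : Set Y)) {l : List Y} :
    l ∈ multichains q A ↔ l.length = q ∧ l.Pairwise (· ≥ ·) ∧ ∀ a ∈ l, a ∈ A := by
  induction q generalizing A l with
  | zero => simpa [multichains] using fun h ↦ by simp [h]
  | succ q ih =>
    have lower (v : Y) : IsLowerSet (Iic v : Set Y) := by simpa using isLowerSet_Iic v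
    cases l with
    | nil => simp [multichains]
    | cons v l =>
      simp only [multichains, mem_biUnion, mem_image, List.cons.injEq, ih (lower _), mem_Iic,
        List.length_cons, add_left_inj, List.pairwise_cons, List.forall_mem_cons]
      constructor
      · rintro ⟨_, hv, _, ⟨length_eq, sorted, hle⟩, rfl, rfl⟩
        exact ⟨length_eq, ⟨hle, sorted⟩, hv, fun a ha ↦ hA (hle a ha) hv⟩
      · rintro ⟨length_eq, ⟨hle, sorted⟩, hv, -⟩
        exact ⟨v, hv, l, ⟨length_eq, sorted, hle⟩, rfl, rfl⟩

lemma card_multichains_succ [PartialOrder Y] [LocallyFiniteOrderBot Y] (q : ℕ) (A : Finset Y) :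
    #(multichains (q + 1) A) = ∑ v ∈ A, #(multichains q (Iic v)) := by
  rw [multichains, card_biUnion]
  · exact sum_congr rfl fun v _ ↦ card_image_of_injective _ List.cons_injective
  · intro u _ v _ huv
    simp only [Function.onFun, disjoint_left, mem_image]
    rintro _ ⟨l, _, rfl⟩ ⟨l', _, h⟩
    exact huv (List.cons.inj h).1.symm

variable {ι : Type*} [Fintype ι]

lemma sum_range_succ_multichoose (q n : ℕ) :
    ∑ i ∈ range (n + 1), q.multichoose i = (q + 1).multichoose n := by
  rw [Nat.sum_range_multichoose, Nat.multichoose_eq, Nat.add_right_comm, Nat.add_sub_cancel,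
    Nat.add_comm, Nat.choose_symm_add]

lemma sum_Iic_prod_multichoose [DecidableEq ι] (q : ℕ) (v : ι → ℕ) :
    ∑ u ∈ Iic v, ∏ i, q.multichoose (u i) = ∏ i, (q + 1).multichoose (v i) := by
  rw [show Iic v = Fintype.piFinset fun i ↦ Iic (v i) from rfl, ← prod_univ_sum]
  exact prod_congr rfl fun i _ ↦ by rw [← Nat.range_succ_eq_Iic, sum_range_succ_multichoose]

lemma sum_prod_zero_multichoose {A : Finset (ι → ℕ)} (hA : 0 ∈ A) :
    ∑ v ∈ A, ∏ i, Nat.multichoose 0 (v i) = 1 := by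
  rw [sum_eq_single_of_mem 0 hA]
  · simp
  · intro v _ hv
    obtain ⟨i, hi⟩ := Function.ne_iff.1 hv
    obtain ⟨n, hn⟩ := Nat.exists_eq_succ_of_ne_zero hi
    exact prod_eq_zero (mem_univ i) (by rw [hn, Nat.multichoose_zero_succ])

lemma card_multichains [DecidableEq ι] (q : ℕ) {A : Finset (ι → ℕ)} (hA : 0 ∈ A) :
    #(multichains q A) = ∑ v ∈ A, ∏ i, q.multichoose (v i) := by
  induction q generalizing A with
  | zero => rw [multichains, card_singleton, sum_prod_zero_multichoose hA]
  | succ q ih =>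
    rw [card_multichains_succ]
    exact sum_congr rfl fun v _ ↦ by rw [ih (by simp), sum_Iic_prod_multichoose]

lemma card_sym_filter_mem (α : Type*) [Fintype α] [DecidableEq α] (T : Finset α) (q : ℕ)
    [DecidablePred fun s : Sym α (#T + q) ↦ ∀ a ∈ T, a ∈ s] :
    #{s : Sym α (#T + q) | ∀ a ∈ T, a ∈ s} = (Fintype.card α).multichoose q := by
  have mem_iff (s : Sym α (#T + q)) : (∀ a ∈ T, a ∈ s) ↔ T.val ≤ s.val :=
    (Multiset.le_iff_subset T.nodup).symm
  rw [← Sym.card_sym_eq_multichoose, ← card_univ]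
  symm
  refine card_nbij (fun s ↦ ⟨T.val + s.val, by simp⟩) (fun s _ ↦ ?_) (fun s _ t _ hst ↦ ?_)
    fun t ht ↦ ?_
  · exact mem_filter.2 ⟨mem_univ _, (mem_iff _).2 (Multiset.le_add_right _ _)⟩
  · exact Subtype.ext (add_left_cancel (congrArg Subtype.val hst))
  · obtain ⟨u, hu⟩ := Multiset.le_iff_exists_add.1 ((mem_iff t).1 (mem_filter.1 ht).2)
    have card_u : u.card = q :=
      Nat.add_left_cancel ((Multiset.card_add T.val u).symm.trans ((congrArg _ hu.symm).trans t.2))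
    exact ⟨⟨u, card_u⟩, mem_coe.2 (mem_univ _), Subtype.ext hu.symm⟩

/-- The nonzero elements of a multiset in `{0, …, d}`, shifted by one to become colors. -/
def colors {d q : ℕ} (s : Sym (Fin (d + 1)) q) : Finset (Fin d) := {r | r.succ ∈ s}

lemma card_filter_subset_colors (d q : ℕ) (D : Finset (Fin d)) :
    #{s : Sym (Fin (d + 1)) q | D ⊆ colors s} = (q + d - #D).choose d := by
  have card_le : #D ≤ d := by simpa using card_le_univ D
  have subset_colors_iff (s : Sym (Fin (d + 1)) q) :
      D ⊆ colors s ↔ ∀ a ∈ D.map (Fin.succEmb d), a ∈ s := by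
    simp [colors, subset_iff]
  simp only [subset_colors_iff]
  obtain hq | hq := lt_or_ge q #D
  · rw [Nat.choose_eq_zero_of_lt (by omega), card_eq_zero, filter_eq_empty_iff]
    intro s _ hs
    have := Multiset.card_le_card ((Multiset.le_iff_subset (Finset.nodup _)).2 hs)
    simp at this
    omega
  · obtain ⟨n, rfl⟩ : ∃ n, q = #(D.map (Fin.succEmb d)) + n :=
      ⟨q - #D, by rw [card_map, Nat.add_sub_cancel' hq]⟩
    rw [card_sym_filter_mem, Fintype.card_fin, Nat.multichoose_eq, card_map,
      show d + 1 + n - 1 = d + n by omega, show #D + n + d - #D = n + d by omega,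
      add_comm, Nat.choose_symm_add]

end Count

section Words

variable {ι : Type*}

section Realization

variable [DecidableEq ι]

lemma exists_letterCount_eq [Finite ι] (v : ι → ℕ) : ∃ l : List ι, letterCount l = v := by
  have := Fintype.ofFinite ι
  refine ⟨(∑ i, Multiset.replicate (v i) i).toList, funext fun j ↦ ?_⟩
  rw [letterCount, ← Multiset.coe_count, Multiset.coe_toList, Multiset.count_sum']
  simp [Multiset.count_replicate]

variable [Fintype ι]

lemma exists_letterCount_take_eq {x : List (ι → ℕ)} (hx : x.Pairwise (· ≥ ·)) {v : ι → ℕ}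
    (hv : ∀ a ∈ x, a ≤ v) :
    ∃ l : List ι, letterCount l = v ∧ ∀ a ∈ x, letterCount (l.take (∑ i, a i)) = a := by
  induction x generalizing v with
  | nil => simpa using exists_letterCount_eq v
  | cons a x ih =>
    obtain ⟨hle_a, hx⟩ := List.pairwise_cons.1 hx
    obtain ⟨hav, -⟩ := List.forall_mem_cons.1 hv
    obtain ⟨l, rfl, hl⟩ := ih hx hle_a
    obtain ⟨l', hl'⟩ := exists_letterCount_eq (v - letterCount l)
    refine ⟨l ++ l', by rw [letterCount_append, hl', add_tsub_cancel_of_le hav], ?_⟩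
    have take_le (b : ι → ℕ) (hb : b ≤ letterCount l) :
        (l ++ l').take (∑ i, b i) = l.take (∑ i, b i) :=
      List.take_append_of_le_length (sum_letterCount l ▸ sum_le_sum fun i _ ↦ hb i)
    refine List.forall_mem_cons.2 ⟨?_, fun b hb ↦ ?_⟩
    · rw [take_le _ le_rfl, sum_letterCount, List.take_length]
    · rw [take_le b (hle_a b hb), hl b hb]

namespace IsDiscretePolymatroid

variable {P : Set (ι → ℕ)} {d : ℕ}

lemma exists_basis_ge (hP : IsDiscretePolymatroid P d) {v : ι → ℕ} (hv : v ∈ P) :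
    ∃ b ∈ P, ∑ i, b i = d ∧ v ≤ b := by
  let bases : Set (ι → ℕ) := {b | b ∈ P ∧ ∑ i, b i = d}
  have finite_image : ((v ⊓ ·) '' bases).Finite :=
    (Set.finite_Iic v).subset (Set.image_subset_iff.2 fun _ _ ↦ inf_le_left (a := v))
  obtain ⟨b, ⟨hb, sum_eq⟩, maximal⟩ := finite_image.exists_maximalFor' _ _ hP.exists_basis
  refine ⟨b, hb, sum_eq, fun j ↦ ?_⟩
  by_contra! hj
  obtain ⟨i, hi, b', hb', exchange⟩ := hP.exchange b hb sum_eq v hv j hj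
  have sum_eq' : ∑ i, b' i = d := by
    have := congrArg (fun u ↦ ∑ l, u l) exchange
    simpa [sum_add_distrib, sum_eq] using this
  have apply_eq (l : ι) : b' l + (if l = i then 1 else 0) = b l + (if l = j then 1 else 0) := by
    simpa [Pi.single_apply] using congrFun exchange l
  have inf_le : v ⊓ b ≤ v ⊓ b' := fun l ↦ by
    have := apply_eq l
    simp only [Pi.inf_apply]
    split_ifs at this <;> subst_vars <;> omega
  have := maximal ⟨hb', sum_eq'⟩ inf_le j
  have := apply_eq j
  simp only [Pi.inf_apply] at *
  split_ifs at this <;> subst_vars <;> omega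

end IsDiscretePolymatroid

end Realization

variable [LinearOrder ι]

lemma IsDiscretePolymatroid.exists_word [Fintype ι] {P : Set (ι → ℕ)} {d : ℕ}
    (hP : IsDiscretePolymatroid P d) {x : List (ι → ℕ)}
    (hx : x.Pairwise (· ≥ ·)) (hxP : ∀ a ∈ x, a ∈ P) :
    ∃ w : BasisWord P d, ∀ a ∈ x, letterCount (w.val.take (∑ i, a i)) = a := by
  obtain ⟨b, hb, sum_eq, hle⟩ : ∃ b ∈ P, ∑ i, b i = d ∧ ∀ a ∈ x, a ≤ b := by
    cases x with
    | nil => simpa using hP.exists_basis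
    | cons a x =>
      obtain ⟨b, hb, sum_eq, hab⟩ := hP.exists_basis_ge (hxP a (by simp))
      refine ⟨b, hb, sum_eq, List.forall_mem_cons.2 ⟨hab, fun c hc ↦ ?_⟩⟩
      exact (List.rel_of_pairwise_cons hx hc).trans hab
  obtain ⟨l, rfl, hl⟩ := exists_letterCount_take_eq hx hle
  exact ⟨⟨l, hb, sum_letterCount l ▸ sum_eq⟩, hl⟩

namespace BasisWord

variable {P : Set (ι → ℕ)} {d q : ℕ}

/-- The multichain consisting of the vectors with sums in `s` in the maximal chain of a word. -/
def multichain (w : BasisWord P d) (s : Sym (Fin (d + 1)) q) : List (ι → ℕ) :=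
  ((s : Multiset (Fin (d + 1))).sort (· ≥ ·)).map
    fun r : Fin (d + 1) ↦ letterCount (w.val.take r)

lemma length_multichain (w : BasisWord P d) (s : Sym (Fin (d + 1)) q) :
    (w.multichain s).length = q := by
  rw [multichain, List.length_map, Multiset.length_sort]
  exact s.2

lemma pairwise_multichain (w : BasisWord P d) (s : Sym (Fin (d + 1)) q) :
    (w.multichain s).Pairwise (· ≥ ·) := by
  refine List.pairwise_map.2 ((Multiset.pairwise_sort _ (· ≥ ·)).imp fun h ↦ ?_)
  exact letterCount_mono (List.take_sublist_take_left h)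

lemma mem_of_mem_multichain (hP : IsLowerSet P) (w : BasisWord P d) {s : Sym (Fin (d + 1)) q}
    {a : ι → ℕ} (ha : a ∈ w.multichain s) : a ∈ P := by
  obtain ⟨r, -, rfl⟩ := List.mem_map.1 ha
  exact hP (letterCount_mono (List.take_sublist _ _)) w.letterCount_mem

lemma map_sum_multichain [Fintype ι] (w : BasisWord P d) (s : Sym (Fin (d + 1)) q) :
    ((w.multichain s).map fun a ↦ ∑ i, a i : Multiset ℕ) =
      (s : Multiset (Fin (d + 1))).map Fin.val := by
  have sum_prefix (r : Fin (d + 1)) : ∑ i, letterCount (w.val.take r) i = r := by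
    rw [sum_letterCount, List.length_take, w.length_eq, min_eq_left r.is_le]
  simp only [multichain, List.map_map, Function.comp_def, sum_prefix, ← Multiset.map_coe,
    Multiset.sort_eq]

lemma multichain_eq_multichain_iff {w w' : BasisWord P d} {s : Sym (Fin (d + 1)) q} :
    w.multichain s = w'.multichain s ↔ Set.EqOn w.chain w'.chain (colors s) := by
  rw [multichain, multichain, List.map_inj_left]
  refine ⟨fun h r hr ↦ ?_, fun h r hr ↦ ?_⟩
  · exact h r.succ ((Multiset.mem_sort _).2 (mem_filter.1 hr).2)
  · cases r using Fin.cases with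
    | zero => simp
    | succ r => exact h (mem_filter.2 ⟨mem_univ _, (Multiset.mem_sort _).1 hr⟩)

end BasisWord

namespace IsDiscretePolymatroid

variable [Fintype ι] {P : Set (ι → ℕ)} {d q : ℕ}

lemma exists_multichain_eq (hP : IsDiscretePolymatroid P d) {x : List (ι → ℕ)}
    (length_eq : x.length = q) (hx : x.Pairwise (· ≥ ·)) (hxP : ∀ a ∈ x, a ∈ P) :
    ∃ (w : BasisWord P d) (s : Sym (Fin (d + 1)) q), w.multichain s = x := by
  obtain ⟨w, hw⟩ := hP.exists_word hx hxP
  let rank (a : ι → ℕ) : Fin (d + 1) := Fin.ofNat (d + 1) (∑ i, a i)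
  have coe_rank (a : ι → ℕ) (ha : a ∈ x) : (rank a : ℕ) = ∑ i, a i :=
    Nat.mod_eq_of_lt (Nat.lt_succ_of_le (hP.sum_le a (hxP a ha)))
  have ranks_sorted : (x.map rank).Pairwise (· ≥ ·) := by
    refine List.pairwise_map.2 (hx.imp_of_mem fun ha hb hab ↦ ?_)
    rw [ge_iff_le, Fin.le_def, coe_rank _ ha, coe_rank _ hb]
    exact sum_le_sum fun i _ ↦ hab i
  refine ⟨w, ⟨(x.map rank : List _), by simpa using length_eq⟩, ?_⟩
  change ((x.map rank : Multiset _).sort (· ≥ ·)).map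
    (fun r : Fin (d + 1) ↦ letterCount (w.val.take r)) = x
  rw [Multiset.coe_sort, List.mergeSort_of_pairwise (by simpa using ranks_sorted), List.map_map]
  refine (List.map_congr_left fun a ha ↦ ?_).trans (List.map_id x)
  rw [Function.comp_apply, coe_rank a ha, hw a ha, id]

lemma existsUnique_multichain_eq (hP : IsDiscretePolymatroid P d) (w : BasisWord P d)
    (s : Sym (Fin (d + 1)) q) :
    ∃! u : BasisWord P d, u.multichain s = w.multichain s ∧ u.restriction ⊆ colors s := by
  simpa only [BasisWord.multichain_eq_multichain_iff] using hP.isShelling.existsUnique (colors s) w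

theorem sum_prod_multichoose {A : Finset (ι → ℕ)}
    (hA : IsDiscretePolymatroid (A : Set (ι → ℕ)) d) (q : ℕ) :
    ∑ v ∈ A, ∏ i, q.multichoose (v i) =
      ∑ w : BasisWord (A : Set (ι → ℕ)) d, (q + d - #w.restriction).choose d := by
  classical
  simp_rw [← card_multichains q hA.zero_mem, ← card_filter_subset_colors, ← card_sigma]
  symm
  refine card_nbij (fun z ↦ z.1.multichain z.2) (fun z _ ↦ ?_) ?_ fun x hx ↦ ?_
  · exact (mem_multichains hA.isLowerSet).2 ⟨z.1.length_multichain z.2,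
      z.1.pairwise_multichain z.2, fun a ↦ z.1.mem_of_mem_multichain hA.isLowerSet⟩
  · rintro ⟨w, s⟩ hw ⟨w', s'⟩ hw' heq
    simp only [coe_sigma, Set.mem_sigma_iff, coe_filter, mem_univ, true_and, Set.mem_ofPred_eq,
      coe_univ, Set.mem_univ] at hw hw' heq
    obtain rfl : s = s' := by
      have := congrArg (fun x ↦ (x.map fun a ↦ ∑ i, a i : Multiset ℕ)) heq
      simp only [BasisWord.map_sum_multichain] at this
      exact Subtype.ext (Multiset.map_injective Fin.val_injective this)
    rw [(hA.existsUnique_multichain_eq w' s).unique ⟨heq, hw⟩ ⟨rfl, hw'⟩]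
  · obtain ⟨length_eq, sorted, mem_A⟩ := (mem_multichains hA.isLowerSet).1 hx
    obtain ⟨w, s, rfl⟩ := hA.exists_multichain_eq length_eq sorted mem_A
    obtain ⟨u, ⟨heq, hu⟩, -⟩ := hA.existsUnique_multichain_eq w s
    exact ⟨⟨u, s⟩, by simpa using hu, heq⟩

end IsDiscretePolymatroid

end Words

end Multichains

section HStar

/-- The polynomial `binom(X + d - j, d)`. For `j = 0, …, d` these form the basis in which the
`h^*`-vector of a polynomial of degree at most `d` is read off. -/
noncomputable def shiftedChoose (d j : ℕ) : ℚ[X] :=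
  (d.factorial : ℚ)⁻¹ • ∏ l ∈ range d, (X + C ((d : ℚ) - j - l))

lemma eval_shiftedChoose {d j : ℕ} (hj : j ≤ d) (q : ℕ) :
    (shiftedChoose d j).eval (q : ℚ) = (q + d - j).choose d := by
  have eval_factor (l : ℕ) :
      (X + C ((d : ℚ) - j - l)).eval (q : ℚ) = ((q + d - j : ℕ) : ℚ) - l := by
    rw [Nat.cast_sub (by lia), eval_add, eval_X, eval_C]
    push_cast
    ring
  rw [shiftedChoose, eval_smul, eval_prod, prod_congr rfl fun l _ ↦ eval_factor l,
    ← descPochhammer_eval_eq_prod_range, Nat.cast_choose_eq_descPochhammer_div, smul_eq_mul,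
    inv_mul_eq_div]

lemma coeff_shiftedChoose (d j : ℕ) : (shiftedChoose d j).coeff d = (d.factorial : ℚ)⁻¹ := by
  have monic : (∏ l ∈ range d, (X + C ((d : ℚ) - j - l))).Monic :=
    monic_prod_of_monic _ _ fun _ _ ↦ monic_X_add_C _
  have natDegree_eq : (∏ l ∈ range d, (X + C ((d : ℚ) - j - l))).natDegree = d := by
    rw [natDegree_prod_of_monic _ _ fun _ _ ↦ monic_X_add_C _]
    simp only [natDegree_X_add_C, sum_const, card_range, smul_eq_mul, mul_one]
  rw [Monic, leadingCoeff, natDegree_eq] at monic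
  rw [shiftedChoose, coeff_smul, monic, smul_eq_mul, mul_one]

lemma natDegree_shiftedChoose_le (d j : ℕ) : (shiftedChoose d j).natDegree ≤ d := by
  refine (natDegree_smul_le _ _).trans ((natDegree_prod_le _ _).trans ?_)
  simp only [natDegree_X_add_C, sum_const, card_range, smul_eq_mul, mul_one, le_refl]

lemma natDegree_sum_shiftedChoose {d : ℕ} {c : ℕ → ℚ} (hc : ∑ j ∈ range (d + 1), c j ≠ 0) :
    (∑ j ∈ range (d + 1), C (c j) * shiftedChoose d j).natDegree = d := by
  refine natDegree_eq_of_le_of_coeff_ne_zero ?_ ?_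
  · exact natDegree_sum_le_of_forall_le _ _ fun j _ ↦
      (natDegree_C_mul_le _ _).trans (natDegree_shiftedChoose_le d j)
  · simp only [finsetSum_coeff, coeff_C_mul, coeff_shiftedChoose, ← sum_mul]
    exact mul_ne_zero hc (by positivity)

-- At `q < i` the `i`-th basis polynomial vanishes, so evaluation at `0, 1, …, d` is triangular.
lemma eq_zero_of_sum_mul_choose_eq_zero {d : ℕ} {c : ℕ → ℚ}
    (hc : ∀ q : ℕ, ∑ j ∈ range (d + 1), c j * (q + d - j).choose d = 0) {j : ℕ} (hj : j ≤ d) :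
    c j = 0 := by
  induction j using Nat.strong_induction_on with
  | _ j ih =>
    have at_j := hc j
    rw [sum_eq_single j] at at_j
    · simpa using at_j
    · intro i hi hij
      obtain hlt | hgt := hij.lt_or_gt
      · rw [ih i hlt (hlt.le.trans hj), zero_mul]
      · rw [mem_range] at hi
        rw [Nat.choose_eq_zero_of_lt (by lia), Nat.cast_zero, mul_zero]
    · exact fun hmem ↦ absurd (mem_range.2 (Nat.lt_succ_of_le hj)) hmem

lemma eval_sum_shiftedChoose (d : ℕ) (c : ℕ → ℚ) (q : ℕ) :
    (∑ j ∈ range (d + 1), C (c j) * shiftedChoose d j).eval (q : ℚ) =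
      ∑ j ∈ range (d + 1), c j * (q + d - j).choose d := by
  rw [eval_finsetSum]
  refine sum_congr rfl fun j hj ↦ ?_
  rw [eval_mul, eval_C, eval_shiftedChoose (Nat.le_of_lt_succ (mem_range.1 hj))]

lemma sum_shiftedChoose_injective {d : ℕ} {a b : ℕ → ℚ}
    (hab : ∑ j ∈ range (d + 1), C (a j) * shiftedChoose d j =
      ∑ j ∈ range (d + 1), C (b j) * shiftedChoose d j) {j : ℕ} (hj : j ≤ d) : a j = b j := by
  refine sub_eq_zero.1 (eq_zero_of_sum_mul_choose_eq_zero (c := a - b) (fun q ↦ ?_) hj)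
  have := congrArg (eval (q : ℚ)) hab
  simpa [eval_sum_shiftedChoose, sub_mul, sub_eq_zero] using this

lemma ext_eval_natCast {p p' : ℚ[X]} (hp : ∀ q : ℕ, p.eval (q : ℚ) = p'.eval (q : ℚ)) : p = p' :=
  eq_of_infinite_eval_eq p p' <|
    (Set.infinite_range_of_injective Nat.cast_injective).mono <| by rintro _ ⟨q, rfl⟩; exact hp q

lemma IsMacaulayVector.congr {d : ℕ} {h h' : ℕ → ℚ} (hh : IsMacaulayVector d h)
    (heq : ∀ j ≤ d, h j = h' j) : IsMacaulayVector d h' := by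
  obtain ⟨𝕜, A, field, ring, algebra, 𝒜, graded,
    artinian, connected, generated, finite, hilbert⟩ := hh
  refine ⟨𝕜, A, field, ring, algebra, 𝒜, graded, artinian, connected, generated, finite, fun k ↦ ?_⟩
  rw [hilbert]
  split_ifs with hk
  · exact heq k hk
  · rfl

variable {ι : Type*} [Fintype ι] [DecidableEq ι] {A : Finset (ι → ℕ)} {d : ℕ}

theorem IsDiscretePolymatroid.exists_isMacaulayVector
    (hA : IsDiscretePolymatroid (A : Set (ι → ℕ)) d) :
    ∃ c : ℕ → ℕ, IsMacaulayVector d (fun j ↦ c j) ∧ ∀ q : ℕ,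
      ∑ v ∈ A, ∏ i, q.multichoose (v i) = ∑ j ∈ range (d + 1), c j * (q + d - j).choose d := by
  obtain ⟨_, rfl⟩ : ∃ order : LinearOrder ι, ‹DecidableEq ι› = order.toDecidableEq :=
    ⟨LinearOrder.lift' (Fintype.equivFin ι) (Fintype.equivFin ι).injective, Subsingleton.elim _ _⟩
  let c (j : ℕ) : ℕ := #{w : BasisWord (A : Set (ι → ℕ)) d | #w.restriction = j}
  refine ⟨c, ?_, fun q ↦ ?_⟩
  · obtain ⟨w, -⟩ := hA.exists_word List.Pairwise.nil (by simp)
    have : Nonempty (BasisWord (A : Set (ι → ℕ)) d) := ⟨w⟩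
    simpa using hA.isShelling.isMacaulayVector fun j _ ↦ rfl
  · rw [hA.sum_prod_multichoose, ← sum_fiberwise_of_maps_to (g := fun w ↦ #w.restriction)
      (t := range (d + 1))]
    · refine sum_congr rfl fun j _ ↦ ?_
      rw [sum_congr rfl fun w hw ↦ by rw [(mem_filter.1 hw).2], sum_const, smul_eq_mul]
    · intro w _
      simpa [Nat.lt_succ_iff] using card_le_univ w.restriction

theorem IsDiscretePolymatroid.isMacaulayVector (hA : IsDiscretePolymatroid (A : Set (ι → ℕ)) d)
    {χ : ℚ[X]} (hχ : ∀ q : ℕ, χ.eval (q : ℚ) = (∑ v ∈ A, ∏ i, q.multichoose (v i) : ℕ))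
    {h : ℕ → ℚ}
    (hh : χ = ∑ j ∈ range (χ.natDegree + 1), C (h j) * shiftedChoose χ.natDegree j) :
    χ.eval 0 = 1 ∧ IsMacaulayVector χ.natDegree h ∧ ∀ j ≤ χ.natDegree, ∃ n : ℕ, h j = n := by
  obtain ⟨c, macaulay, hc⟩ := hA.exists_isMacaulayVector
  have eval_zero : ∑ v ∈ A, ∏ i, Nat.multichoose 0 (v i) = 1 :=
    sum_prod_zero_multichoose hA.zero_mem
  have χ_eq : χ = ∑ j ∈ range (d + 1), C (c j : ℚ) * shiftedChoose d j :=
    ext_eval_natCast fun q ↦ by rw [hχ, hc, eval_sum_shiftedChoose]; push_cast; rfl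
  have sum_ne_zero : ∑ j ∈ range (d + 1), (c j : ℚ) ≠ 0 := by
    intro sum_eq_zero
    have c_eq_zero : ∀ j ∈ range (d + 1), c j = 0 := by
      rwa [← Nat.cast_sum, Nat.cast_eq_zero, sum_eq_zero_iff] at sum_eq_zero
    rw [hc, sum_congr rfl fun j hj ↦ by rw [c_eq_zero j hj, zero_mul], sum_const_zero] at eval_zero
    exact zero_ne_one eval_zero
  have natDegree_eq : χ.natDegree = d := by rw [χ_eq, natDegree_sum_shiftedChoose sum_ne_zero]
  rw [natDegree_eq] at hh ⊢
  have h_eq {j : ℕ} (hj : j ≤ d) : c j = h j := sum_shiftedChoose_injective (χ_eq.symm.trans hh) hj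
  refine ⟨?_, macaulay.congr fun j ↦ h_eq, fun j hj ↦ ⟨c j, (h_eq hj).symm⟩⟩
  simpa [eval_zero] using hχ 0

end HStar

section StrictPolymatroid

variable {ι : Type*}

/-- The vectors of natural numbers whose sum over each nonempty set `I` of coordinates is less than
`f I`. The dragon Hall–Rado condition says that a tuple lies in the strict polymatroid of the
function `I ↦ rk (⋃ i ∈ I, S i)`. -/
def strictPolymatroid (f : Finset ι → ℕ) : Set (ι → ℕ) :=
  {v | ∀ I : Finset ι, I.Nonempty → ∑ i ∈ I, v i < f I}

/-- Submodularity on intersecting pairs of sets. Unlike submodularity, it passes from `f` to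
`f - 1`. -/
def IntersectingSubmodular [DecidableEq ι] (f : Finset ι → ℕ) : Prop :=
  ∀ I J : Finset ι, (I ∩ J).Nonempty → f (I ∩ J) + f (I ∪ J) ≤ f I + f J

/-- A set `I` is tight for a vector `v` of the strict polymatroid of `f` if the constraint that `I`
imposes becomes an equality. -/
def IsTight (f : Finset ι → ℕ) (v : ι → ℕ) (I : Finset ι) : Prop :=
  f I = ∑ i ∈ I, v i + 1

variable {f : Finset ι → ℕ} {b v : ι → ℕ} {i j : ι}

lemma isLowerSet_strictPolymatroid (f : Finset ι → ℕ) : IsLowerSet (strictPolymatroid f) :=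
  fun _ _ hle hv I hI ↦ (sum_le_sum fun i _ ↦ hle i).trans_lt (hv I hI)

lemma zero_mem_strictPolymatroid (hf : ∀ I, I.Nonempty → 0 < f I) : 0 ∈ strictPolymatroid f :=
  fun I hI ↦ by simpa using hf I hI

lemma finite_strictPolymatroid [Finite ι] (f : Finset ι → ℕ) : (strictPolymatroid f).Finite := by
  refine (Set.Finite.pi' fun i ↦ Set.finite_Iic (f {i})).subset fun v hv i ↦ ?_
  simpa using (hv {i} (singleton_nonempty i)).le

section Exchange

variable [DecidableEq ι]

lemma sum_add_single (b : ι → ℕ) (j : ι) (I : Finset ι) :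
    ∑ i ∈ I, (b + Pi.single j 1 : ι → ℕ) i = ∑ i ∈ I, b i + if j ∈ I then 1 else 0 := by
  simp [sum_add_distrib, sum_pi_single']

lemma exists_isTight (hb : b ∈ strictPolymatroid f)
    (hbj : b + Pi.single j 1 ∉ strictPolymatroid f) :
    ∃ I, j ∈ I ∧ IsTight f b I := by
  simp only [strictPolymatroid, Set.mem_ofPred_eq, not_forall, not_lt, sum_add_single] at hbj
  obtain ⟨I, hI, le_sum⟩ := hbj
  have sum_lt := hb I hI
  have hj : j ∈ I := by
    by_contra hj
    rw [if_neg hj] at le_sum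
    lia
  rw [if_pos hj] at le_sum
  exact ⟨I, hj, by rw [IsTight]; lia⟩

lemma IsTight.inter (hf : IntersectingSubmodular f) (hb : b ∈ strictPolymatroid f)
    {I J : Finset ι} (hI : IsTight f b I) (hJ : IsTight f b J) (hIJ : (I ∩ J).Nonempty) :
    IsTight f b (I ∩ J) := by
  have submodular := hf I J hIJ
  have sum_inter_lt := hb (I ∩ J) hIJ
  have sum_union_lt := hb (I ∪ J) (hIJ.mono (inter_subset_left.trans subset_union_left))
  have modular := sum_union_inter (s₁ := I) (s₂ := J) (f := b)
  rw [IsTight] at hI hJ ⊢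
  lia

lemma exists_least_isTight [Finite ι] (hf : IntersectingSubmodular f) (hb : b ∈ strictPolymatroid f)
    (hbj : b + Pi.single j 1 ∉ strictPolymatroid f) :
    ∃ I, j ∈ I ∧ IsTight f b I ∧ ∀ J, j ∈ J → IsTight f b J → I ⊆ J := by
  obtain ⟨I, ⟨hjI, hI⟩, minimal⟩ :=
    (Set.toFinite {I | j ∈ I ∧ IsTight f b I}).exists_minimal (exists_isTight hb hbj)
  refine ⟨I, hjI, hI, fun J hjJ hJ ↦ ?_⟩
  have hj : j ∈ I ∩ J := mem_inter.2 ⟨hjI, hjJ⟩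
  exact (minimal ⟨hj, hI.inter hf hb hJ ⟨j, hj⟩⟩ inter_subset_left).trans inter_subset_right

lemma add_single_sub_single_mem (hb : b ∈ strictPolymatroid f) (hi : 0 < b i)
    (tight_mem : ∀ I, j ∈ I → IsTight f b I → i ∈ I) :
    ∃ b' ∈ strictPolymatroid f, b' + Pi.single i 1 = b + Pi.single j 1 := by
  have single_le : Pi.single i 1 ≤ b + Pi.single j 1 := fun l ↦ by
    obtain rfl | hl := eq_or_ne l i
    · simpa using Nat.add_le_add hi (Nat.zero_le _)
    · simp [hl]
  have cancel := tsub_add_cancel_of_le single_le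
  refine ⟨_, fun I hI ↦ ?_, cancel⟩
  have sum_eq := congrArg (fun a : ι → ℕ ↦ ∑ l ∈ I, a l) cancel
  simp only [sum_add_single] at sum_eq
  have sum_lt := hb I hI
  have not_tight : j ∈ I → i ∉ I → f I ≠ ∑ l ∈ I, b l + 1 := fun hj hi hI ↦ hi (tight_mem I hj hI)
  split_ifs at sum_eq <;> grind

lemma exchange_strictPolymatroid [Finite ι] (hf : IntersectingSubmodular f)
    (hb : b ∈ strictPolymatroid f) (hbj : b + Pi.single j 1 ∉ strictPolymatroid f)
    (hv : v ∈ strictPolymatroid f) (hj : b j < v j) :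
    ∃ i, v i < b i ∧ ∃ b' ∈ strictPolymatroid f, b' + Pi.single i 1 = b + Pi.single j 1 := by
  obtain ⟨I, hjI, tight, least⟩ := exists_least_isTight hf hb hbj
  obtain ⟨i, hiI, hi⟩ : ∃ i ∈ I, v i < b i := by
    by_contra! hle
    have sum_lt := sum_lt_sum hle ⟨j, hjI, hj⟩
    have := hv I ⟨j, hjI⟩
    rw [IsTight] at tight
    lia
  exact ⟨i, hi, add_single_sub_single_mem hb (Nat.zero_lt_of_lt hi) fun J hjJ hJ ↦
    least J hjJ hJ hiI⟩

theorem exists_isDiscretePolymatroid_strictPolymatroid [Fintype ι] (hf : IntersectingSubmodular f)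
    (pos : ∀ I, I.Nonempty → 0 < f I) : ∃ d, IsDiscretePolymatroid (strictPolymatroid f) d := by
  obtain ⟨b, hb, maximum⟩ := Set.exists_max_image (strictPolymatroid f) (fun v ↦ ∑ i, v i)
    (finite_strictPolymatroid f) ⟨0, zero_mem_strictPolymatroid pos⟩
  refine ⟨∑ i, b i, isLowerSet_strictPolymatroid f, maximum, ⟨b, hb, rfl⟩, ?_⟩
  intro b' hb' sum_eq v hv j hj
  refine exchange_strictPolymatroid hf hb' (fun hmem ↦ ?_) hv hj
  have := maximum _ hmem
  rw [sum_add_single, if_pos (mem_univ j), sum_eq] at this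
  lia

end Exchange

end StrictPolymatroid

section BlowUp

lemma coeff_mk_one_pow (q n : ℕ) :
    PowerSeries.coeff n ((PowerSeries.mk 1 : PowerSeries ℕ) ^ q) = q.multichoose n := by
  induction q generalizing n with
  | zero => cases n <;> simp [PowerSeries.coeff_one]
  | succ q ih =>
    rw [pow_succ, PowerSeries.coeff_mul, Nat.sum_antidiagonal_eq_sum_range_succ_mk,
      ← sum_range_succ_multichoose]
    simp [ih]

lemma multichoose_mul (k q n : ℕ) :
    (k * q).multichoose n =
      ∑ u ∈ piAntidiag (univ : Finset (Fin k)) n, ∏ c, q.multichoose (u c) := by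
  calc (k * q).multichoose n
    _ = PowerSeries.coeff n (∏ _c : Fin k, (PowerSeries.mk 1 : PowerSeries ℕ) ^ q) := by
      rw [Fin.prod_const, ← pow_mul, mul_comm q, coeff_mk_one_pow]
    _ = ∑ u ∈ piAntidiag univ n, ∏ c, q.multichoose (u c) := by
      rw [PowerSeries.coeff_prod]
      exact sum_equiv Finsupp.equivFunOnFinite (by simp) (by simp [coeff_mk_one_pow])

variable {ι : Type*} {k : ι → ℕ}

/-- The sums over the blocks of a vector whose coordinate `i` has been replaced by a block of `k i`
coordinates. -/
def blockSum (v : (Σ i, Fin (k i)) → ℕ) (i : ι) : ℕ :=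
  ∑ c, v ⟨i, c⟩

lemma sum_blockSum (v : (Σ i, Fin (k i)) → ℕ) (I : Finset ι) :
    ∑ i ∈ I, blockSum v i = ∑ x ∈ I.sigma fun i ↦ (univ : Finset (Fin (k i))), v x := by
  rw [sum_sigma]
  rfl

section Polymatroid

variable [DecidableEq ι] {f : Finset ι → ℕ}

lemma IntersectingSubmodular.comp_image {κ : Type*} [DecidableEq κ] (hf : IntersectingSubmodular f)
    (mono : Monotone f) (p : κ → ι) : IntersectingSubmodular fun I ↦ f (I.image p) := by
  intro I J hIJ
  have image_inter := image_inter_subset p I J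
  refine le_trans ?_ (hf _ _ ((hIJ.image p).mono image_inter))
  rw [← image_union]
  exact Nat.add_le_add_right (mono image_inter) _

lemma mem_strictPolymatroid_image_fst (mono : Monotone f) (pos : ∀ I, I.Nonempty → 0 < f I)
    {v : (Σ i, Fin (k i)) → ℕ} :
    v ∈ strictPolymatroid (fun I ↦ f (I.image Sigma.fst)) ↔ blockSum v ∈ strictPolymatroid f := by
  refine ⟨fun hv I hI ↦ ?_, fun hv I hI ↦ ?_⟩
  · rw [sum_blockSum]
    obtain empty | nonempty := (I.sigma fun i ↦ (univ : Finset (Fin (k i)))).eq_empty_or_nonempty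
    · simpa [empty] using pos I hI
    · exact (hv _ nonempty).trans_le (mono (image_subset_iff.2 fun x hx ↦ (mem_sigma.1 hx).1))
  · refine lt_of_le_of_lt ?_ (hv _ (hI.image Sigma.fst))
    rw [sum_blockSum]
    exact sum_le_sum_of_subset fun x hx ↦ mem_sigma.2 ⟨mem_image_of_mem _ hx, mem_univ _⟩

end Polymatroid

variable [Fintype ι]

lemma prod_multichoose_mul (q : ℕ) {κ : ι → ℕ} {B : Finset ((Σ i, Fin (k i)) → ℕ)}
    (hB : ∀ v, v ∈ B ↔ blockSum v = κ) :
    ∏ i, (k i * q).multichoose (κ i) = ∑ v ∈ B, ∏ x, q.multichoose (v x) := by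
  classical
  simp only [multichoose_mul, prod_univ_sum]
  symm
  refine sum_equiv (Equiv.piCurry fun i (_ : Fin (k i)) ↦ ℕ) (fun v ↦ ?_) fun v _ ↦ ?_
  · simp only [hB, funext_iff, Fintype.mem_piFinset, mem_piAntidiag, mem_univ, implies_true,
      and_true]
    rfl
  · exact Fintype.prod_sigma _

lemma sum_prod_multichoose_mul (q : ℕ) {K : Finset (ι → ℕ)} {A : Finset ((Σ i, Fin (k i)) → ℕ)}
    (hA : ∀ v, v ∈ A ↔ blockSum v ∈ K) :
    ∑ κ ∈ K, ∏ i, (k i * q).multichoose (κ i) = ∑ v ∈ A, ∏ x, q.multichoose (v x) := by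
  classical
  rw [← sum_fiberwise_of_maps_to fun v hv ↦ (hA v).1 hv]
  refine sum_congr rfl fun κ hκ ↦ prod_multichoose_mul q fun v ↦ ?_
  rw [mem_filter, hA, and_iff_right_of_imp]
  rintro rfl
  exact hκ

end BlowUp

section Snapper

lemma eval_binomLowerP (k n q : ℕ) :
    (binomLowerP (C (k : ℚ) * X) n).eval (q : ℚ) = (k * q).multichoose n := by
  have ascFactorial_eq : ∏ j ∈ range n, ((k * q + j : ℕ) : ℚ) =
      n.factorial * (k * q).multichoose n := by
    rw [Nat.multichoose_eq]
    exact_mod_cast (Nat.ascFactorial_eq_prod_range _ _).symm.trans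
      (Nat.ascFactorial_eq_factorial_mul_choose' _ _)
  rw [binomLowerP, eval_smul, eval_prod, smul_eq_mul,
    inv_mul_eq_iff_eq_mul₀ (by positivity), ← ascFactorial_eq]
  simp

section BiUnion

variable {ι α : Type*} [DecidableEq α] {rk : Finset α → ℕ}

lemma monotone_comp_biUnion (mono : Monotone rk) (S : ι → Finset α) :
    Monotone fun I : Finset ι ↦ rk (I.biUnion S) :=
  fun _ _ hIJ ↦ mono (biUnion_subset_biUnion_of_subset_left S hIJ)

lemma intersectingSubmodular_comp_biUnion [DecidableEq ι] (mono : Monotone rk)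
    (submodular : ∀ I J, rk (I ∩ J) + rk (I ∪ J) ≤ rk I + rk J) (S : ι → Finset α) :
    IntersectingSubmodular fun I : Finset ι ↦ rk (I.biUnion S) := by
  intro I J _
  have biUnion_inter : (I ∩ J).biUnion S ⊆ I.biUnion S ∩ J.biUnion S :=
    subset_inter (biUnion_subset_biUnion_of_subset_left S inter_subset_left)
      (biUnion_subset_biUnion_of_subset_left S inter_subset_right)
  refine le_trans ?_ (submodular _ _)
  rw [← union_biUnion]
  exact Nat.add_le_add_right (mono biUnion_inter) _

end BiUnion

variable {α : Type*} [Fintype α] [DecidableEq α] {m : ℕ} {rk : Finset α → ℕ}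
  {S : Fin m → Finset α}

lemma dragonHallRado_iff {κ : Fin m → ℕ} :
    DragonHallRado rk S κ ↔ κ ∈ strictPolymatroid fun I ↦ rk (I.biUnion S) := by
  simp only [DragonHallRado, strictPolymatroid, Nat.one_add_le_iff, Set.mem_ofPred_eq]

lemma eval_finsum_dragonHallRado (k : Fin m → ℕ) {A : Finset ((Σ i, Fin (k i)) → ℕ)}
    (hA : ∀ v, v ∈ A ↔ DragonHallRado rk S (blockSum v)) (q : ℕ) :
    (∑ᶠ (κ : Fin m → ℕ) (_ : DragonHallRado rk S κ),
      ∏ i, binomLowerP (C (k i : ℚ) * X) (κ i)).eval (q : ℚ) =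
        (∑ v ∈ A, ∏ x, q.multichoose (v x) : ℕ) := by
  have finite : {κ | DragonHallRado rk S κ}.Finite := by
    simp only [dragonHallRado_iff]
    exact finite_strictPolymatroid _
  rw [← sum_prod_multichoose_mul (K := finite.toFinset) q fun v ↦
    (hA v).trans finite.mem_toFinset.symm]
  refine (congrArg (eval (q : ℚ)) (finsum_mem_eq_finite_toFinset_sum _ finite)).trans ?_
  simp only [eval_finsetSum, eval_prod, eval_binomLowerP, Nat.cast_sum, Nat.cast_prod]

theorem exists_isDiscretePolymatroid_dragonHallRado (mono : Monotone rk)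
    (submodular : ∀ I J, rk (I ∩ J) + rk (I ∪ J) ≤ rk I + rk J) (pos : ∀ i, 1 ≤ rk (S i))
    (k : Fin m → ℕ) :
    ∃ (A : Finset ((Σ i, Fin (k i)) → ℕ)) (d : ℕ),
      IsDiscretePolymatroid (A : Set ((Σ i, Fin (k i)) → ℕ)) d ∧
        ∀ v, v ∈ A ↔ DragonHallRado rk S (blockSum v) := by
  let f (I : Finset (Fin m)) : ℕ := rk (I.biUnion S)
  have f_mono : Monotone f := monotone_comp_biUnion mono S
  have f_pos (I : Finset (Fin m)) : I.Nonempty → 0 < f I := fun ⟨i, hi⟩ ↦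
    (pos i).trans (mono (subset_biUnion_of_mem S hi))
  obtain ⟨d, hd⟩ := exists_isDiscretePolymatroid_strictPolymatroid
    ((intersectingSubmodular_comp_biUnion mono submodular S).comp_image f_mono
      (Sigma.fst : (Σ i, Fin (k i)) → Fin m)) fun I hI ↦ f_pos _ (hI.image Sigma.fst)
  have finite := finite_strictPolymatroid fun I : Finset (Σ i, Fin (k i)) ↦ f (I.image Sigma.fst)
  refine ⟨finite.toFinset, d, by rwa [finite.coe_toFinset], fun v ↦ ?_⟩
  rw [finite.mem_toFinset, mem_strictPolymatroid_image_fst f_mono f_pos, dragonHallRado_iff]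

end Snapper

theorem hstar_vector_of_simplicially_positive_is_macaulay_general
    {α : Type*} [Fintype α] [DecidableEq α] {m : ℕ} {rk : Finset α → ℕ} (mono : Monotone rk)
    (submodular : ∀ I J, rk (I ∩ J) + rk (I ∪ J) ≤ rk I + rk J)
    {S : Fin m → Finset α} (pos : ∀ i, 1 ≤ rk (S i)) (k : Fin m → ℕ)
    {χ : ℚ[X]} (hχ : χ = ∑ᶠ (κ : Fin m → ℕ) (_ : DragonHallRado rk S κ),
      ∏ i, binomLowerP (C (k i : ℚ) * X) (κ i))
    {h : ℕ → ℚ} (hh : χ = ∑ j ∈ range (χ.natDegree + 1),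
      C (h j) * shiftedChoose χ.natDegree j) :
    χ.eval 0 = 1 ∧ IsMacaulayVector χ.natDegree h ∧ ∀ j ≤ χ.natDegree, ∃ n : ℕ, h j = n := by
  obtain ⟨A, d, hA, mem_A⟩ := exists_isDiscretePolymatroid_dragonHallRado mono submodular pos k
  exact hA.isMacaulayVector (fun q ↦ hχ ▸ eval_finsum_dragonHallRado k mem_A q) hh

/-- For a loopless matroid of rank `r ≥ 1`, pairwise distinct nonempty subsets `S_1, …, S_m`,
and nonnegative integers `k_1, …, k_m`, the Snapper polynomial
`χ(q) = Σ_{κ dragon Hall–Rado} Π_i binom(q k_i + κ_i - 1, κ_i)` satisfies `χ(0) = 1`, and the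
coefficients `h_0, …, h_d` (where `d = deg χ`) of its expansion
`χ(q) = Σ_j h_j binom(q + d - j, d)` form a Macaulay vector; in particular each `h_j` is a
nonnegative integer. -/
theorem hstar_vector_of_simplicially_positive_is_macaulay
    {α : Type} [Fintype α] [DecidableEq α] {m r : ℕ}
    (rk : Finset α → ℕ) (hM : IsMatroidRank rk) (hloopless : ∀ e : α, rk {e} = 1)
    (hrank : rk Finset.univ = r) (hr : 1 ≤ r)
    (S : Fin m → Finset α) (hS : ∀ i, (S i).Nonempty) (hSinj : Function.Injective S)
    (k : Fin m → ℕ)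
    (χ : Polynomial ℚ)
    (hχ : χ = ∑ᶠ (κ : Fin m → ℕ) (_ : DragonHallRado rk S κ),
      ∏ i, binomLowerP (Polynomial.C (k i : ℚ) * Polynomial.X) (κ i))
    (d : ℕ) (hd : d = χ.natDegree)
    (h : ℕ → ℚ)
    (hh : χ = ∑ j ∈ Finset.range (d + 1), Polynomial.C (h j) *
      ((d.factorial : ℚ)⁻¹ •
        ∏ l ∈ Finset.range d, (Polynomial.X + Polynomial.C ((d : ℚ) - j - l)))) :
    χ.eval 0 = 1 ∧ IsMacaulayVector d h ∧ ∀ j ≤ d, ∃ n : ℕ, h j = (n : ℚ) := by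
  subst hd
  refine hstar_vector_of_simplicially_positive_is_macaulay_general hM.2.1 hM.2.2.1 (fun i ↦ ?_) k
    hχ hh
  obtain ⟨e, he⟩ := hS i
  exact hloopless e ▸ hM.2.1 {e} (S i) (singleton_subset_iff.2 he)
end

section
/- Let M be a loopless matroid of rank r ≥ 1 with rank function rk_M on a finite ground set E, let S_1,…,S_m be pairwise distinct nonempty subsets of E, and let k = (k_1,…,k_m) ∈ ℤ^m. Define the Snapper polynomial χ(q) = Σ_{κ} Π_{i=1}^m binom(q·k_i + κ_i − 1, κ_i) ∈ ℚ[q], where the (finite) sum is over all κ ∈ ℤ_{≥0}^m satisfying the dragon Hall–Rado condition, and set c = Σ_{i=1}^m k_i · h_{S_i} in the Chow ring A(M)_ℚ with rational coefficients. Then: (a) the degree of χ is at most the largest integer j ≥ 0 such that c^j ≠ 0 in A(M)_ℚ (the numerical dimension of c); and (b) the degree of χ equals r−1 if and only if c^{r−1} ≠ 0 in A(M)_ℚ. -/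
open Finset Polynomial

attribute [local instance] Classical.propDecidable

/-- A flat of a matroid: a subset closed under the closure operator. -/
def IsFlat {α : Type*} [Fintype α] [DecidableEq α] (rk : Finset α → ℕ) (F : Finset α) : Prop :=
  ∀ e : α, rk (insert e F) = rk F → e ∈ F

/-- The nonempty flats of a matroid, indexing the Chow ring generators `z_F`. -/
def NonemptyFlat {α : Type*} [Fintype α] [DecidableEq α] (rk : Finset α → ℕ) : Type _ :=
  {F : Finset α // F.Nonempty ∧ IsFlat rk F}

noncomputable instance {α : Type*} [Fintype α] [DecidableEq α] (rk : Finset α → ℕ) :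
    Fintype (NonemptyFlat rk) :=
  Fintype.ofFinite {F : Finset α // F.Nonempty ∧ IsFlat rk F}

/-- The defining ideal of the Chow ring of a matroid (with rational coefficients): generated
by the products `z_F z_{F'}` over incomparable pairs of nonempty flats, and the linear forms
`Σ_{F ∋ i} z_F` for ground set elements `i`. -/
noncomputable def chowIdealQ {α : Type*} [Fintype α] [DecidableEq α] (rk : Finset α → ℕ) :
    Ideal (MvPolynomial (NonemptyFlat rk) ℚ) :=
  Ideal.span
    ({p | ∃ F F' : NonemptyFlat rk, ¬F.1 ⊆ F'.1 ∧ ¬F'.1 ⊆ F.1 ∧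
        p = MvPolynomial.X F * MvPolynomial.X F'} ∪
      {p | ∃ i : α,
        p = ∑ F : NonemptyFlat rk, if i ∈ F.1 then MvPolynomial.X F else 0})

/-- The Chow ring `A(M)_ℚ` of a loopless matroid, with rational coefficients. -/
noncomputable def ChowRingQ {α : Type*} [Fintype α] [DecidableEq α] (rk : Finset α → ℕ) :=
  MvPolynomial (NonemptyFlat rk) ℚ ⧸ chowIdealQ rk

noncomputable instance {α : Type*} [Fintype α] [DecidableEq α] (rk : Finset α → ℕ) :
    CommRing (ChowRingQ rk) :=
  Ideal.Quotient.commRing (chowIdealQ rk)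

/-- The simplicial class `h_S = -Σ_{F ⊇ S} z_F`, as a polynomial representative. -/
noncomputable def hPolyQ {α : Type*} [Fintype α] [DecidableEq α] (rk : Finset α → ℕ)
    (S : Finset α) : MvPolynomial (NonemptyFlat rk) ℚ :=
  -∑ F : NonemptyFlat rk, if S ⊆ F.1 then MvPolynomial.X F else 0

/-!
Let the elements `b S` of a `ℚ`-algebra satisfy the relations `b S = b T` for `S ⊆ T` of equal rank,
`b {i} = 0` and `(b S - b (S ∪ T)) * (b T - b (S ∪ T)) = 0` of the classes `h_S`. Then there is a
map from the Chow ring with `h_S ↦ b S`. If `p` is a polynomial without constant term, then the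
elements `p (b S)` satisfy these relations as well.

The functional `D` on `ℚ[X_S]` which is `1` on the monomials satisfying the dragon Hall–Rado
condition and `0` on all others gives such elements, namely the classes `x_S` of the variables
modulo the largest ideal on which `D` vanishes. Hence the elements `-log (1 - x_S)` also satisfy the
relations, and there is a map `f` from the Chow ring with `f h_S = -log (1 - x_S)`. Expanding
`∏ i, (1 - x_{S i}) ^ (-q * k i) = exp (q * f c)` in two ways yields
`χ.coeff j = D (f (c ^ j)) / j!`, so that `c ^ j = 0` implies `χ.coeff j = 0`.

By uncrossing, all products of `n ≥ r - 1` classes `h_S` are multiples of `h_E ^ n`. This power is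
`0` for `n ≥ r`, while `D (f (h_E ^ (r - 1))) = D (x_E ^ (r - 1)) = 1`; hence `c ^ (r - 1)` vanishes
if and only if `χ.coeff (r - 1)` does.
-/

namespace IsMatroidRank

variable {α : Type*} [Fintype α] [DecidableEq α] {rk : Finset α → ℕ} {S T U : Finset α}

theorem mono (hM : IsMatroidRank rk) (hST : S ⊆ T) : rk S ≤ rk T :=
  hM.2.1 S T hST

theorem rank_inter_add_rank_union_le (hM : IsMatroidRank rk) (S T : Finset α) :
    rk (S ∩ T) + rk (S ∪ T) ≤ rk S + rk T :=
  hM.2.2.1 S T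

theorem rank_insert_le (hM : IsMatroidRank rk) (i : α) (S : Finset α) :
    rk (insert i S) ≤ rk S + rk {i} := by
  have := hM.rank_inter_add_rank_union_le {i} S
  rw [← insert_eq] at this
  omega

theorem nonempty_of_rank_pos (hM : IsMatroidRank rk) (hS : 0 < rk S) : S.Nonempty := by
  rw [nonempty_iff_ne_empty]
  rintro rfl
  exact hS.ne' hM.1

theorem rank_le_sum_singleton (hM : IsMatroidRank rk) (S : Finset α) :
    rk S ≤ ∑ i ∈ S, rk {i} := by
  induction S using Finset.induction_on with
  | empty => exact hM.1.le
  | insert i S hi ih =>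
    rw [sum_insert hi]
    have := hM.rank_insert_le i S
    omega

theorem exists_mem_rank_le_singleton_add (hM : IsMatroidRank rk) (hS : S.Nonempty) {s : ℕ}
    (hs : rk S ≤ s + 1) : ∃ i ∈ S, rk S ≤ rk {i} + s := by
  obtain hS0 | hSpos := Nat.eq_zero_or_pos (rk S)
  · obtain ⟨i, hi⟩ := hS
    exact ⟨i, hi, by omega⟩
  · obtain ⟨i, hi, hi0⟩ := exists_ne_zero_of_sum_ne_zero
      (hSpos.trans_le (hM.rank_le_sum_singleton S)).ne'
    exact ⟨i, hi, by omega⟩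

theorem rank_union_eq (hM : IsMatroidRank rk) (hST : S ⊆ T) (hr : rk S = rk T) (hSU : S ⊆ U) :
    rk (U ∪ T) = rk U := by
  have hsub := hM.rank_inter_add_rank_union_le U T
  have hinter := hM.mono (subset_inter hSU hST)
  have hunion := hM.mono (subset_union_left (s₁ := U) (s₂ := T))
  omega

theorem subset_flat_iff (hM : IsMatroidRank rk) (hST : S ⊆ T) (hr : rk S = rk T)
    (hU : IsFlat rk U) : S ⊆ U ↔ T ⊆ U := by
  refine ⟨fun hSU e he => hU e (le_antisymm ?_ (hM.mono (subset_insert e U))), hST.trans⟩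
  rw [← hM.rank_union_eq hST hr hSU]
  exact hM.mono (insert_subset (mem_union_right U he) subset_union_left)

end IsMatroidRank

theorem exists_flat_rank_eq {α : Type*} [Fintype α] [DecidableEq α] (rk : Finset α → ℕ)
    (S : Finset α) :
    ∃ T, S ⊆ T ∧ rk S = rk T ∧ IsFlat rk T := by
  obtain ⟨T, hT⟩ := (Set.toFinite {T | S ⊆ T ∧ rk S = rk T}).exists_maximal ⟨S, Subset.rfl, rfl⟩
  obtain ⟨hST, hr⟩ := hT.prop
  refine ⟨T, hST, hr, fun e he => ?_⟩
  exact hT.le_of_ge ⟨hST.trans (subset_insert e T), hr.trans he.symm⟩ (subset_insert e T)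
    (mem_insert_self e T)

theorem card_sdiff_union_lt {α : Type*} [DecidableEq α] {G S T : Finset α} (hT : T ⊆ G)
    (hTS : ¬T ⊆ S) : #(G \ (S ∪ T)) < #(G \ S) := by
  obtain ⟨e, heT, heS⟩ := not_subset.1 hTS
  refine card_lt_card (ssubset_iff_of_subset (sdiff_subset_sdiff Subset.rfl subset_union_left) |>.2
    ⟨e, mem_sdiff.2 ⟨hT heT, heS⟩, fun he => ?_⟩)
  exact (mem_sdiff.1 he).2 (mem_union_right S heT)

/-- Any multiset of finsets is turned into one with a largest member by repeatedly replacing two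
incomparable members `S`, `T` by `S ∪ T` and one of `S`, `T`, `S ∪ T`. -/
theorem uncrossing_induction {α : Type*} [DecidableEq α]
    {motive : Multiset (Finset α) → Prop} (zero : motive 0)
    (cons_of_subset : ∀ S m, (∀ T ∈ m, T ⊆ S) → motive (S ::ₘ m))
    (cons_cons : ∀ S T m, motive (S ::ₘ (S ∪ T) ::ₘ m) → motive (T ::ₘ (S ∪ T) ::ₘ m) →
      motive ((S ∪ T) ::ₘ (S ∪ T) ::ₘ m) → motive (S ::ₘ T ::ₘ m))
    (m : Multiset (Finset α)) : motive m := by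
  obtain rfl | hm := eq_or_ne m 0
  · exact zero
  obtain ⟨S, hSm, hmax⟩ := m.toFinset.exists_max_image card
    (by simpa [Finset.nonempty_iff_ne_empty] using hm)
  rw [Multiset.mem_toFinset] at hSm
  simp only [Multiset.mem_toFinset] at hmax
  obtain ⟨m₁, hm₁⟩ := Multiset.exists_cons_of_mem hSm
  by_cases hle : ∀ T ∈ m₁, T ⊆ S
  · exact hm₁ ▸ cons_of_subset S m₁ hle
  push Not at hle
  obtain ⟨T, hTm, hTS⟩ := hle
  have : ¬S ⊆ T := fun h =>
    hTS (eq_of_subset_of_card_le h (hmax T (hm₁ ▸ Multiset.mem_cons_of_mem hTm))).ge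
  obtain ⟨m₂, hm₂⟩ := Multiset.exists_cons_of_mem hTm
  rw [hm₁, hm₂]
  exact cons_cons S T m₂ (uncrossing_induction zero cons_of_subset cons_cons _)
    (uncrossing_induction zero cons_of_subset cons_cons _)
    (uncrossing_induction zero cons_of_subset cons_cons _)
termination_by (m.map fun S => #(m.sup \ S)).sum
decreasing_by
  all_goals
    have hsup : S ∪ (S ∪ T ∪ m₂.sup) = S ∪ (T ∪ m₂.sup) ∧
        T ∪ (S ∪ T ∪ m₂.sup) = S ∪ (T ∪ m₂.sup) ∧
        S ∪ T ∪ (S ∪ T ∪ m₂.sup) = S ∪ (T ∪ m₂.sup) := by grind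
    have hSlt := card_sdiff_union_lt (G := S ∪ (T ∪ m₂.sup)) (by grind) hTS
    have hTlt := card_sdiff_union_lt (G := S ∪ (T ∪ m₂.sup)) subset_union_left ‹¬S ⊆ T›
    rw [union_comm T S] at hTlt
    simp only [hm₁, hm₂, Multiset.map_cons, Multiset.sum_cons, Multiset.sup_cons, sup_eq_union,
      hsup]
    omega

/-- The relations satisfied by the classes `h_S` in the Chow ring of a matroid, imposed on an
arbitrary family of ring elements indexed by subsets of the ground set. -/
structure IsSimplicialFamily {α B : Type*} [DecidableEq α] [CommRing B] (rk : Finset α → ℕ)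
    (b : Finset α → B) : Prop where
  eq_of_rank_eq : ∀ {S T : Finset α}, S ⊆ T → rk S = rk T → b S = b T
  singleton : ∀ i : α, b {i} = 0
  sub_mul_sub : ∀ S T : Finset α, (b S - b (S ∪ T)) * (b T - b (S ∪ T)) = 0

namespace IsSimplicialFamily

variable {α B : Type*} [DecidableEq α] [CommRing B] {rk : Finset α → ℕ}
  {b : Finset α → B}

theorem mul_eq (hb : IsSimplicialFamily rk b) (S T : Finset α) :
    b S * b T = b S * b (S ∪ T) + b T * b (S ∪ T) - b (S ∪ T) * b (S ∪ T) := by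
  linear_combination hb.sub_mul_sub S T

theorem mul_insert (hb : IsSimplicialFamily rk b) (i : α) (S : Finset α) :
    b S * b (insert i S) = b (insert i S) ^ 2 := by
  have := hb.sub_mul_sub S {i}
  rw [hb.singleton, union_comm, ← insert_eq] at this
  linear_combination -this

theorem aeval [Algebra ℚ B] (hb : IsSimplicialFamily rk b) {p : ℚ[X]} (hp : p.coeff 0 = 0) :
    IsSimplicialFamily rk fun S => Polynomial.aeval (b S) p where
  eq_of_rank_eq hST hr := by rw [hb.eq_of_rank_eq hST hr]
  singleton i := by
    rw [hb.singleton, ← coeff_zero_eq_aeval_zero', hp, map_zero]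
  sub_mul_sub S T := by
    have hdvd (x y : B) : x - y ∣ Polynomial.aeval x p - Polynomial.aeval y p := by
      simpa only [aeval_def, ← eval_map] using sub_dvd_eval_sub x y (p.map (algebraMap ℚ B))
    rw [← zero_dvd_iff, ← hb.sub_mul_sub S T]
    exact mul_dvd_mul (hdvd _ _) (hdvd _ _)

variable [Fintype α]

theorem mul_pow_of_rank_le (hM : IsMatroidRank rk) (hb : IsSimplicialFamily rk b)
    {S T : Finset α} (hST : S ⊆ T) {s : ℕ} (hs : rk T ≤ rk S + s) :
    b S * b T ^ s = b T ^ (s + 1) := by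
  obtain rfl | hne := eq_or_ne S T
  · exact (pow_succ' (b S) s).symm
  obtain ⟨i, hiT, hiS⟩ := exists_of_ssubset (hST.ssubset_of_ne hne)
  have hT : insert i S ⊆ T := insert_subset hiT hST
  have : #(T \ insert i S) < #(T \ S) := by
    rw [sdiff_insert]
    exact card_erase_lt_of_mem (mem_sdiff.2 ⟨hiT, hiS⟩)
  have hle := hM.rank_insert_le i S
  have hone := hM.2.2.2 i
  obtain hr | hr := (hM.mono (subset_insert i S)).eq_or_lt
  · rw [hb.eq_of_rank_eq (subset_insert i S) hr]
    exact hb.mul_pow_of_rank_le hM hT (by omega)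
  · have hmono := hM.mono hT
    obtain _ | s := s
    · omega
    have ih : b (insert i S) * b T ^ s = b T ^ (s + 1) := hb.mul_pow_of_rank_le hM hT (by omega)
    calc b S * b T ^ (s + 1)
        = b S * b (insert i S) * b T ^ s := by rw [← ih, mul_assoc]
      _ = b (insert i S) * (b (insert i S) * b T ^ s) := by rw [hb.mul_insert, sq, mul_assoc]
      _ = b (insert i S) * b T ^ s * b T := by rw [ih, pow_succ, ← mul_assoc, ih, pow_succ]
      _ = b T ^ (s + 1 + 1) := by rw [ih, pow_succ _ (s + 1)]
termination_by #(T \ S)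

theorem pow_eq_zero (hM : IsMatroidRank rk) (hb : IsSimplicialFamily rk b) {S : Finset α}
    (hS : S.Nonempty) {s : ℕ} (hs : rk S ≤ s + 1) : b S ^ (s + 1) = 0 := by
  obtain ⟨i, hi, hr⟩ := hM.exists_mem_rank_le_singleton_add hS hs
  rw [← hb.mul_pow_of_rank_le hM (singleton_subset_iff.2 hi) hr, hb.singleton, zero_mul]

/-- The two ways to use up a factor `b S` containing all the others: it is absorbed into the power
of `b G`, or the factors are numerous enough for their product to be a multiple of a vanishing power
of `b S`. -/
theorem pow_mul_prod_mem_span [Algebra ℚ B] (hM : IsMatroidRank rk) (hb : IsSimplicialFamily rk b)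
    (n : ℕ) {G : Finset α} {a : ℕ} (hrank : rk G ≤ a + n + 1) (m : Multiset (Finset α))
    (hm : m.card = n) (hG : ∀ S ∈ m, S.Nonempty ∧ S ⊆ G) :
    b G ^ a * (m.map b).prod ∈ Submodule.span ℚ {b G ^ (a + n)} := by
  induction n generalizing G a m with
  | zero => simp [Multiset.card_eq_zero.1 hm]
  | succ n ih =>
    induction m using uncrossing_induction with
    | zero => simp at hm
    | cons_of_subset S m hle =>
      rw [Multiset.forall_mem_cons] at hG
      rw [Multiset.card_cons, add_left_inj] at hm
      rw [Multiset.map_cons, Multiset.prod_cons]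
      by_cases habsorb : rk G ≤ rk S + a
      · have := ih (a := a + 1) (by omega) m hm hG.2
        rwa [← hb.mul_pow_of_rank_le hM hG.1.2 habsorb, add_right_comm, add_assoc, mul_comm (b S),
          mul_assoc] at this
      · have := ih (G := S) (a := 1) (by omega) m hm fun T hT => ⟨(hG.2 T hT).1, hle T hT⟩
        rw [add_comm 1, hb.pow_eq_zero hM hG.1.1 (by omega), Submodule.span_zero_singleton,
          Submodule.mem_bot, pow_one] at this
        rw [this, mul_zero]
        exact zero_mem _
    | cons_cons S T m hS hT hST =>
      simp only [Multiset.card_cons, Multiset.forall_mem_cons, Multiset.map_cons,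
        Multiset.prod_cons] at *
      have hunion : (S ∪ T).Nonempty ∧ S ∪ T ⊆ G := ⟨hG.1.1.inl, union_subset hG.1.2 hG.2.1.2⟩
      have hexchange : b G ^ a * (b S * (b T * (m.map b).prod)) =
          b G ^ a * (b S * (b (S ∪ T) * (m.map b).prod)) +
            b G ^ a * (b T * (b (S ∪ T) * (m.map b).prod)) -
            b G ^ a * (b (S ∪ T) * (b (S ∪ T) * (m.map b).prod)) := by
        linear_combination b G ^ a * (m.map b).prod * hb.mul_eq S T
      rw [hexchange]
      exact sub_mem (add_mem (hS hm ⟨hG.1, hunion, hG.2.2⟩) (hT hm ⟨hG.2.1, hunion, hG.2.2⟩))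
        (hST hm ⟨hunion, hunion, hG.2.2⟩)

theorem pow_mem_span_pow [Algebra ℚ B] (hM : IsMatroidRank rk) (hb : IsSimplicialFamily rk b)
    {n : ℕ} (hn : rk univ ≤ n + 1) {c : B}
    (hc : c ∈ Submodule.span ℚ (b '' {S | S.Nonempty})) :
    c ^ n ∈ Submodule.span ℚ {b univ ^ n} := by
  have hle : Submodule.span ℚ (b '' {S | S.Nonempty}) ^ n ≤
      Submodule.span ℚ {b univ ^ n} := by
    rw [Submodule.span_pow, Submodule.span_le]
    intro x hx
    obtain ⟨f, rfl⟩ := Set.mem_pow.1 hx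
    choose S hS hbS using fun i => (f i).2
    have := hb.pow_mul_prod_mem_span hM n (G := univ) (a := 0) (by omega)
      (Multiset.ofList (List.ofFn S)) (by simp)
      (by simpa [List.mem_ofFn] using hS)
    simpa [List.map_ofFn, Function.comp_def, hbS] using this
  exact hle (Submodule.pow_mem_pow _ hc n)

end IsSimplicialFamily

section ChowRing

variable {α : Type*} [Fintype α] [DecidableEq α] {rk : Finset α → ℕ}

instance : PartialOrder (NonemptyFlat rk) :=
  inferInstanceAs (PartialOrder {F : Finset α // F.Nonempty ∧ IsFlat rk F})

/-- The class `h_S = -∑_{F ⊇ S} z_F` built from elements `ζ F` of an arbitrary ring in place of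
the generators `z_F` of the Chow ring. -/
noncomputable def simplicialClass {B : Type*} [CommRing B] (ζ : NonemptyFlat rk → B)
    (S : Finset α) : B :=
  -∑ F : NonemptyFlat rk, if S ⊆ F.1 then ζ F else 0

/-- The defining relations of the Chow ring, imposed on elements `ζ F` of an arbitrary ring. -/
structure SatisfiesChowRelations {B : Type*} [CommRing B] (ζ : NonemptyFlat rk → B) : Prop where
  mul_eq_zero : ∀ F G : NonemptyFlat rk, ¬F ≤ G → ¬G ≤ F → ζ F * ζ G = 0
  simplicialClass_singleton : ∀ i : α, simplicialClass ζ {i} = 0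

section CommRing

variable {B : Type*} [CommRing B] {ζ : NonemptyFlat rk → B}

theorem map_simplicialClass {C : Type*} [CommRing C] (f : B →+* C) (ζ : NonemptyFlat rk → B)
    (S : Finset α) : f (simplicialClass ζ S) = simplicialClass (f ∘ ζ) S := by
  simp only [simplicialClass, map_neg, map_sum, apply_ite f, map_zero, Function.comp_apply]

theorem simplicialClass_flat (ζ : NonemptyFlat rk → B) (F : NonemptyFlat rk) :
    simplicialClass ζ F.1 = -∑ G with F ≤ G, ζ G := by
  rw [simplicialClass, sum_filter]
  congr 1
  exact sum_congr rfl fun G _ => if_congr Iff.rfl rfl rfl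

theorem simplicialClass_eq_of_rank_eq (hM : IsMatroidRank rk) (ζ : NonemptyFlat rk → B)
    {S T : Finset α} (hST : S ⊆ T) (hr : rk S = rk T) :
    simplicialClass ζ S = simplicialClass ζ T := by
  simp only [simplicialClass]
  congr 1
  exact sum_congr rfl fun F _ => if_congr (hM.subset_flat_iff hST hr F.2.2) rfl rfl

theorem simplicialClass_sub_union (ζ : NonemptyFlat rk → B) (S T : Finset α) :
    simplicialClass ζ S - simplicialClass ζ (S ∪ T) = -∑ F with S ⊆ F.1 ∧ ¬T ⊆ F.1, ζ F := by
  rw [simplicialClass, simplicialClass, sum_filter, neg_sub_neg, ← sum_sub_distrib,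
    ← sum_neg_distrib]
  refine sum_congr rfl fun F _ => ?_
  by_cases hS : S ⊆ F.1 <;> by_cases hT : T ⊆ F.1 <;> simp [hS, hT, union_subset_iff]

theorem simplicialClass_sub_mul_sub (ζ : NonemptyFlat rk → B) (S T : Finset α) :
    (simplicialClass ζ S - simplicialClass ζ (S ∪ T)) *
        (simplicialClass ζ T - simplicialClass ζ (S ∪ T)) =
      ∑ F with S ⊆ F.1 ∧ ¬T ⊆ F.1, ∑ G with T ⊆ G.1 ∧ ¬S ⊆ G.1, ζ F * ζ G := by
  rw [simplicialClass_sub_union, union_comm, simplicialClass_sub_union, neg_mul_neg, sum_mul_sum]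

theorem SatisfiesChowRelations.isSimplicialFamily (hM : IsMatroidRank rk)
    (hζ : SatisfiesChowRelations ζ) : IsSimplicialFamily rk (simplicialClass ζ) where
  eq_of_rank_eq := simplicialClass_eq_of_rank_eq hM ζ
  singleton := hζ.simplicialClass_singleton
  sub_mul_sub S T := by
    rw [simplicialClass_sub_mul_sub]
    refine sum_eq_zero fun F hF => sum_eq_zero fun G hG => hζ.mul_eq_zero F G ?_ ?_
    · exact fun hFG => (mem_filter.1 hG).2.2 ((mem_filter.1 hF).2.1.trans hFG)
    · exact fun hGF => (mem_filter.1 hF).2.2 ((mem_filter.1 hG).2.1.trans hGF)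

/-- By descending induction, all terms of the expansion of
`(h_F - h_{F ∪ G}) * (h_G - h_{F ∪ G}) = 0` other than `ζ F * ζ G` vanish. -/
theorem satisfiesChowRelations_of_simplicialClass_eq {b : Finset α → B}
    (hb : IsSimplicialFamily rk b)
    (hζ : ∀ S : Finset α, S.Nonempty → simplicialClass ζ S = b S) : SatisfiesChowRelations ζ where
  simplicialClass_singleton i := by rw [hζ _ (singleton_nonempty i), hb.singleton]
  mul_eq_zero F G hFG hGF := by
    suffices ∀ p : NonemptyFlat rk × NonemptyFlat rk, ¬p.1 ≤ p.2 → ¬p.2 ≤ p.1 →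
      ζ p.1 * ζ p.2 = 0 from this (F, G) hFG hGF
    intro p
    induction p using WellFoundedGT.induction with
    | ind p ih =>
    obtain ⟨F, G⟩ := p
    intro hFG hGF
    have hexpand := simplicialClass_sub_mul_sub ζ F.1 G.1
    rw [hζ _ F.2.1, hζ _ G.2.1, hζ _ F.2.1.inl, hb.sub_mul_sub, ← sum_product',
      sum_eq_single (F, G)] at hexpand
    · exact hexpand.symm
    · rintro ⟨F', G'⟩ hmem hne
      simp only [mem_product, mem_filter, mem_univ, true_and] at hmem
      refine ih (F', G') (lt_of_le_of_ne ⟨hmem.1.1, hmem.2.1⟩ hne.symm) ?_ ?_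
      · exact fun h => hmem.2.2 (hmem.1.1.trans h)
      · exact fun h => hmem.1.2 (hmem.2.1.trans h)
    · intro hmem
      simp only [mem_product, mem_filter, mem_univ, true_and, Subset.refl] at hmem
      exact absurd ⟨hGF, hFG⟩ hmem

end CommRing

/-- Möbius inversion on a finite partial order, in the form of mere solvability. -/
theorem exists_forall_sum_ge_eq {X B : Type*} [Fintype X] [PartialOrder X] [AddCommGroup B]
    (g : X → B) : ∃ ζ : X → B, ∀ x, ∑ y with x ≤ y, ζ y = g x := by
  let ζ : X → B := WellFoundedGT.fix fun x ih => g x - ∑ y, if h : x < y then ih y h else 0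
  have hζ (x : X) : ζ x = g x - ∑ y with x < y, ζ y := by
    rw [sum_filter]
    exact WellFoundedGT.fix_eq _ x
  refine ⟨ζ, fun x => ?_⟩
  have hge : univ.filter (x ≤ ·) = insert x (univ.filter (x < ·)) := by
    ext y
    simp only [mem_filter, mem_univ, true_and, mem_insert, le_iff_eq_or_lt, eq_comm]
  rw [hge, sum_insert (by simp), hζ x, sub_add_cancel]

theorem exists_simplicialClass_eq {B : Type*} [CommRing B] {b : Finset α → B}
    (hM : IsMatroidRank rk) (hb : IsSimplicialFamily rk b) :
    ∃ ζ : NonemptyFlat rk → B, ∀ S : Finset α, S.Nonempty → simplicialClass ζ S = b S := by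
  obtain ⟨ζ, hζ⟩ := exists_forall_sum_ge_eq fun F : NonemptyFlat rk => -b F.1
  refine ⟨ζ, fun S hS => ?_⟩
  obtain ⟨T, hST, hr, hT⟩ := exists_flat_rank_eq rk S
  let F : NonemptyFlat rk := ⟨T, hS.mono hST, hT⟩
  rw [simplicialClass_eq_of_rank_eq hM ζ hST hr, hb.eq_of_rank_eq hST hr]
  change simplicialClass ζ F.1 = b F.1
  rw [simplicialClass_flat, hζ, neg_neg]

noncomputable instance : Algebra ℚ (ChowRingQ rk) :=
  inferInstanceAs (Algebra ℚ (MvPolynomial (NonemptyFlat rk) ℚ ⧸ chowIdealQ rk))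

/-- The class `h_S` in the Chow ring. -/
noncomputable def chowClass (rk : Finset α → ℕ) (S : Finset α) : ChowRingQ rk :=
  Ideal.Quotient.mk (chowIdealQ rk) (hPolyQ rk S)

theorem satisfiesChowRelations_iff {B : Type*} [CommRing B] [Algebra ℚ B]
    {ζ : NonemptyFlat rk → B} :
    SatisfiesChowRelations ζ ↔ chowIdealQ rk ≤ RingHom.ker (MvPolynomial.aeval (R := ℚ) ζ) := by
  have hlinear (i : α) : MvPolynomial.aeval (R := ℚ) ζ
      (∑ F : NonemptyFlat rk, if i ∈ F.1 then MvPolynomial.X F else 0) =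
        -simplicialClass ζ {i} := by
    simp only [simplicialClass, singleton_subset_iff, neg_neg, map_sum,
      apply_ite (MvPolynomial.aeval (R := ℚ) ζ), MvPolynomial.aeval_X, map_zero]
  rw [chowIdealQ, Ideal.span_le, Set.union_subset_iff]
  refine ⟨fun h => ⟨?_, ?_⟩, fun ⟨hprod, hlin⟩ => ⟨fun F G hFG hGF => ?_, fun i => ?_⟩⟩
  · rintro _ ⟨F, G, hFG, hGF, rfl⟩
    simpa using h.mul_eq_zero F G hFG hGF
  · rintro _ ⟨i, rfl⟩
    simpa [hlinear] using h.simplicialClass_singleton i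
  · simpa using hprod ⟨F, G, hFG, hGF, rfl⟩
  · simpa [hlinear] using hlin ⟨i, rfl⟩

theorem isSimplicialFamily_chowClass (hM : IsMatroidRank rk) :
    IsSimplicialFamily rk (chowClass rk) := by
  let mkChow : MvPolynomial (NonemptyFlat rk) ℚ →ₐ[ℚ] ChowRingQ rk :=
    Ideal.Quotient.mkₐ ℚ (chowIdealQ rk)
  have hζ : SatisfiesChowRelations (mkChow ∘ MvPolynomial.X) := by
    rw [satisfiesChowRelations_iff, ← MvPolynomial.aeval_unique]
    exact fun p hp => Ideal.Quotient.eq_zero_iff_mem.2 hp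
  convert hζ.isSimplicialFamily hM using 1
  exact funext (map_simplicialClass mkChow.toRingHom MvPolynomial.X)

theorem exists_chowRingQ_lift (hM : IsMatroidRank rk) {B : Type*} [CommRing B] [Algebra ℚ B]
    {b : Finset α → B} (hb : IsSimplicialFamily rk b) :
    ∃ f : ChowRingQ rk →ₐ[ℚ] B, ∀ S : Finset α, S.Nonempty → f (chowClass rk S) = b S := by
  obtain ⟨ζ, hζ⟩ := exists_simplicialClass_eq hM hb
  have hker := satisfiesChowRelations_iff.1 (satisfiesChowRelations_of_simplicialClass_eq hb hζ)
  refine ⟨Ideal.Quotient.liftₐ (chowIdealQ rk) (MvPolynomial.aeval ζ) hker, fun S hS => ?_⟩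
  calc MvPolynomial.aeval ζ (hPolyQ rk S)
      = simplicialClass (MvPolynomial.aeval (R := ℚ) ζ ∘ MvPolynomial.X) S :=
        map_simplicialClass (MvPolynomial.aeval (R := ℚ) ζ).toRingHom MvPolynomial.X S
    _ = b S := by
      rw [← hζ S hS]
      congr 1
      exact funext (MvPolynomial.aeval_X ζ)

end ChowRing

section KernelIdeal

variable {K R : Type*} [CommRing K] [CommRing R] [Algebra K R]

/-- The largest ideal contained in the kernel of a linear functional. -/
def kernelIdeal (φ : R →ₗ[K] K) : Ideal R where
  carrier := {p | ∀ q, φ (p * q) = 0}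
  zero_mem' q := by rw [zero_mul, map_zero]
  add_mem' hp hp' q := by rw [add_mul, map_add, hp q, hp' q, add_zero]
  smul_mem' c p hp q := by rw [smul_eq_mul, mul_comm c, mul_assoc, hp]

/-- The functional induced by `φ` on the quotient by `kernelIdeal φ`. -/
def kernelIdealLift (φ : R →ₗ[K] K) : R ⧸ kernelIdeal φ →ₗ[K] K :=
  ((kernelIdeal φ).restrictScalars K).liftQ φ (fun p hp => by simpa using hp 1) ∘ₗ
    (Submodule.Quotient.restrictScalarsEquiv K (kernelIdeal φ)).symm.toLinearMap

theorem kernelIdealLift_mk (φ : R →ₗ[K] K) (p : R) :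
    kernelIdealLift φ (Ideal.Quotient.mk (kernelIdeal φ) p) = φ p :=
  rfl

end KernelIdeal

section Dragon

variable {α : Type*}

/-- The number of members, counted with multiplicity, of a multiset `κ` of sets that are contained
in `U`. -/
def weightWithin (κ : Finset α →₀ ℕ) (U : Finset α) : ℕ :=
  ∑ A ∈ U.powerset, κ A

theorem weightWithin_add (κ κ' : Finset α →₀ ℕ) (U : Finset α) :
    weightWithin (κ + κ') U = weightWithin κ U + weightWithin κ' U :=
  sum_add_distrib

theorem weightWithin_single [DecidableEq α] (A : Finset α) (n : ℕ) (U : Finset α) :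
    weightWithin (Finsupp.single A n) U = if A ⊆ U then n else 0 := by
  simp only [weightWithin, Finsupp.single_apply, sum_ite_eq, mem_powerset]

/-- The dragon Hall–Rado condition for a multiset `κ` of sets. It is tested on all sets `U` in place
of the unions of members of `κ`; if `rk U = 0`, then truncated subtraction makes it say that no
member of `κ` lies in `U`. -/
def IsDragon (rk : Finset α → ℕ) (κ : Finset α →₀ ℕ) : Prop :=
  ∀ U, weightWithin κ U ≤ rk U - 1

variable {rk : Finset α → ℕ} {κ : Finset α →₀ ℕ} {A B S T : Finset α}

theorem isDragon_single_add_iff [DecidableEq α] :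
    IsDragon rk (Finsupp.single A 1 + κ) ↔
      ∀ U, (if A ⊆ U then 1 else 0) + weightWithin κ U ≤ rk U - 1 := by
  simp only [IsDragon, weightWithin_add, weightWithin_single]

theorem IsDragon.single_add_mono (h : IsDragon rk (Finsupp.single A 1 + κ)) (hAB : A ⊆ B) :
    IsDragon rk (Finsupp.single B 1 + κ) := by
  rw [isDragon_single_add_iff] at *
  intro U
  have := h U
  by_cases hB : B ⊆ U
  · simpa only [hB, hAB.trans hB] using this
  · rw [if_neg hB]
    omega

theorem IsDragon.exists_tight_of_not (hB : IsDragon rk (Finsupp.single B 1 + κ))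
    (hA : ¬IsDragon rk (Finsupp.single A 1 + κ)) :
    ∃ U, A ⊆ U ∧ ¬B ⊆ U ∧ rk U ≤ weightWithin κ U + 1 := by
  rw [isDragon_single_add_iff] at hA hB
  push Not at hA
  obtain ⟨U, hU⟩ := hA
  have := hB U
  refine ⟨U, ?_⟩
  by_cases hAU : A ⊆ U <;> by_cases hBU : B ⊆ U <;> simp [hAU, hBU] at * <;> omega

theorem isDragon_single_univ [Fintype α] (rk : Finset α → ℕ) :
    IsDragon rk (Finsupp.single univ (rk univ - 1)) := by
  intro U
  rw [weightWithin_single]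
  split_ifs with hU
  · rw [univ_subset_iff.1 hU]
  · exact Nat.zero_le _

variable [DecidableEq α]

theorem weightWithin_sum_single {ι : Type*} [Fintype ι] (S : ι → Finset α) (κ : ι → ℕ)
    (U : Finset α) :
    weightWithin (∑ i, Finsupp.single (S i) (κ i)) U = ∑ i with S i ⊆ U, κ i := by
  simp only [weightWithin, Finsupp.finsetSum_apply, sum_filter]
  rw [sum_comm]
  exact sum_congr rfl fun i _ => weightWithin_single (S i) (κ i) U

theorem weightWithin_supermodular (κ : Finset α →₀ ℕ) (U V : Finset α) :
    weightWithin κ U + weightWithin κ V ≤ weightWithin κ (U ∪ V) + weightWithin κ (U ∩ V) := by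
  have hinter : (U ∩ V).powerset = U.powerset ∩ V.powerset := by
    ext A
    simp only [mem_inter, mem_powerset, subset_inter_iff]
  rw [weightWithin, weightWithin, ← sum_union_inter, weightWithin, weightWithin, hinter]
  refine Nat.add_le_add_right (sum_le_sum_of_subset ?_) _
  exact union_subset (powerset_mono.2 subset_union_left) (powerset_mono.2 subset_union_right)

theorem isDragon_pair_iff :
    IsDragon rk (Finsupp.single S 1 + (Finsupp.single T 1 + κ)) ↔
      IsDragon rk (Finsupp.single S 1 + (Finsupp.single (S ∪ T) 1 + κ)) ∧
        IsDragon rk (Finsupp.single T 1 + (Finsupp.single (S ∪ T) 1 + κ)) := by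
  refine ⟨fun h => ⟨?_, ?_⟩, fun ⟨hS, hT⟩ => ?_⟩
  · rw [add_left_comm] at h ⊢
    exact h.single_add_mono subset_union_right
  · rw [add_left_comm]
    exact h.single_add_mono subset_union_left
  · simp only [isDragon_single_add_iff, weightWithin_add, weightWithin_single,
      union_subset_iff] at *
    intro U
    have hSU := hS U
    have hTU := hT U
    by_cases hSsub : S ⊆ U <;> by_cases hTsub : T ⊆ U <;> simp_all

variable [Fintype α]

theorem isDragon_union_pair_iff (hM : IsMatroidRank rk) :
    IsDragon rk (Finsupp.single (S ∪ T) 1 + (Finsupp.single (S ∪ T) 1 + κ)) ↔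
      IsDragon rk (Finsupp.single S 1 + (Finsupp.single (S ∪ T) 1 + κ)) ∨
        IsDragon rk (Finsupp.single T 1 + (Finsupp.single (S ∪ T) 1 + κ)) := by
  refine ⟨fun h => ?_, fun h => h.elim (·.single_add_mono subset_union_left)
    (·.single_add_mono subset_union_right)⟩
  by_contra! hnot
  obtain ⟨V, hSV, hV, hVtight⟩ := h.exists_tight_of_not hnot.1
  obtain ⟨W, hTW, hW, hWtight⟩ := h.exists_tight_of_not hnot.2
  have hsub := hM.rank_inter_add_rank_union_le V W
  have hsup := weightWithin_supermodular κ V W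
  have hunion := h (V ∪ W)
  have hinter := h (V ∩ W)
  simp only [weightWithin_add, weightWithin_single, hV, hW, union_subset_union hSV hTW,
    if_true, if_false] at hunion hinter hVtight hWtight
  omega

theorem not_isDragon_single_singleton_add (hM : IsMatroidRank rk) (i : α) :
    ¬IsDragon rk (Finsupp.single {i} 1 + κ) := by
  intro h
  have hi := isDragon_single_add_iff.1 h {i}
  have hone := hM.2.2.2 i
  rw [if_pos Subset.rfl] at hi
  omega

theorem isDragon_single_add_congr (hM : IsMatroidRank rk) (hST : S ⊆ T) (hr : rk S = rk T) :
    IsDragon rk (Finsupp.single S 1 + κ) ↔ IsDragon rk (Finsupp.single T 1 + κ) := by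
  refine ⟨fun h => h.single_add_mono hST, fun h => ?_⟩
  by_contra hnot
  obtain ⟨U, hSU, -, htight⟩ := h.exists_tight_of_not hnot
  have hUT := isDragon_single_add_iff.1 h (U ∪ T)
  have hmono : weightWithin κ U ≤ weightWithin κ (U ∪ T) :=
    sum_le_sum_of_subset (powerset_mono.2 subset_union_left)
  rw [hM.rank_union_eq hST hr hSU, if_pos subset_union_right] at hUT
  omega

theorem isDragon_sum_single_iff (hM : IsMatroidRank rk) {m : ℕ} {S : Fin m → Finset α}
    (hS : ∀ i, 0 < rk (S i)) (κ : Fin m → ℕ) :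
    IsDragon rk (∑ i, Finsupp.single (S i) (κ i)) ↔ DragonHallRado rk S κ := by
  simp only [IsDragon, weightWithin_sum_single]
  refine ⟨fun h I ⟨i, hi⟩ => ?_, fun h U => ?_⟩
  · have hle : ∑ i ∈ I, κ i ≤ ∑ i with S i ⊆ I.biUnion S, κ i :=
      sum_le_sum_of_subset fun i hi => mem_filter.2 ⟨mem_univ i, subset_biUnion_of_mem S hi⟩
    have hI := h (I.biUnion S)
    have hpos := (hS i).trans_le (hM.mono (subset_biUnion_of_mem S hi))
    omega
  · obtain hempty | hne := (univ.filter (S · ⊆ U)).eq_empty_or_nonempty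
    · rw [hempty, sum_empty]
      exact Nat.zero_le _
    · have hU := h _ hne
      have hle := hM.mono (biUnion_subset.2 fun i hi => (mem_filter.1 hi).2 :
        (univ.filter (S · ⊆ U)).biUnion S ⊆ U)
      omega

end Dragon

section DragonFamily

variable {α : Type*} {rk : Finset α → ℕ}

/-- The linear functional sending a monomial to `1` if its exponent satisfies the dragon Hall–Rado
condition and to `0` otherwise. -/
noncomputable def dragonFunctional (rk : Finset α → ℕ) : MvPolynomial (Finset α) ℚ →ₗ[ℚ] ℚ :=
  (MvPolynomial.basisMonomials (Finset α) ℚ).constr ℚ fun κ => if IsDragon rk κ then 1 else 0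

theorem dragonFunctional_monomial (κ : Finset α →₀ ℕ) :
    dragonFunctional rk (MvPolynomial.monomial κ 1) = if IsDragon rk κ then 1 else 0 := by
  exact (MvPolynomial.basisMonomials (Finset α) ℚ).constr_basis ℚ _ κ

theorem mem_kernelIdeal_dragonFunctional {p : MvPolynomial (Finset α) ℚ} :
    p ∈ kernelIdeal (dragonFunctional rk) ↔
      ∀ κ, dragonFunctional rk (p * MvPolynomial.monomial κ 1) = 0 := by
  refine ⟨fun hp κ => hp _, fun hp q => ?_⟩
  have : dragonFunctional rk ∘ₗ LinearMap.mulLeft ℚ p = 0 :=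
    (MvPolynomial.basisMonomials (Finset α) ℚ).ext fun κ => by simpa using hp κ
  exact LinearMap.congr_fun this q

/-- The class of the variable `X_S` in the quotient of the polynomial ring by the largest ideal on
which the dragon functional vanishes. -/
noncomputable def dragonClass (rk : Finset α → ℕ) (S : Finset α) :
    MvPolynomial (Finset α) ℚ ⧸ kernelIdeal (dragonFunctional rk) :=
  Ideal.Quotient.mk _ (MvPolynomial.X S)

theorem isSimplicialFamily_dragonClass [Fintype α] [DecidableEq α] (hM : IsMatroidRank rk) :
    IsSimplicialFamily rk (dragonClass rk) where
  eq_of_rank_eq {S T} hST hr := by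
    refine Ideal.Quotient.eq.2 (mem_kernelIdeal_dragonFunctional.2 fun κ => ?_)
    simp only [sub_mul, MvPolynomial.X, MvPolynomial.monomial_mul, one_mul, map_sub,
      dragonFunctional_monomial, isDragon_single_add_congr hM hST hr, sub_self]
  singleton i := by
    refine Ideal.Quotient.eq_zero_iff_mem.2 (mem_kernelIdeal_dragonFunctional.2 fun κ => ?_)
    rw [MvPolynomial.X, MvPolynomial.monomial_mul, one_mul, dragonFunctional_monomial,
      if_neg (not_isDragon_single_singleton_add hM i)]
  sub_mul_sub S T := by
    refine Ideal.Quotient.eq_zero_iff_mem.2 (mem_kernelIdeal_dragonFunctional.2 fun κ => ?_)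
    have hexpand : (.X S - .X (S ∪ T)) * (.X T - .X (S ∪ T)) * .monomial κ 1 =
      (.X S * (.X T * .monomial κ 1) - .X S * (.X (S ∪ T) * .monomial κ 1)
        - .X T * (.X (S ∪ T) * .monomial κ 1) + .X (S ∪ T) * (.X (S ∪ T) * .monomial κ 1) :
        MvPolynomial (Finset α) ℚ) := by ring
    rw [hexpand]
    simp only [MvPolynomial.X, MvPolynomial.monomial_mul, one_mul, map_sub, map_add,
      dragonFunctional_monomial, isDragon_pair_iff (S := S) (T := T),
      isDragon_union_pair_iff (S := S) (T := T) hM]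
    split_ifs <;> simp_all

theorem kernelIdealLift_prod_dragonClass_pow {ι : Type*} [Fintype ι] (S : ι → Finset α)
    (κ : ι → ℕ) :
    kernelIdealLift (dragonFunctional rk) (∏ i, dragonClass rk (S i) ^ κ i) =
      if IsDragon rk (∑ i, Finsupp.single (S i) (κ i)) then 1 else 0 := by
  rw [← dragonFunctional_monomial, MvPolynomial.monomial_sum_one,
    ← kernelIdealLift_mk (dragonFunctional rk),
    map_prod (Ideal.Quotient.mk (kernelIdeal (dragonFunctional rk)))]
  simp only [dragonClass, MvPolynomial.X, ← map_pow, MvPolynomial.monomial_pow, one_pow,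
    Finsupp.smul_single, smul_eq_mul, mul_one]

theorem kernelIdealLift_dragonClass_univ_pow [Fintype α] (rk : Finset α → ℕ) :
    kernelIdealLift (dragonFunctional rk) (dragonClass rk univ ^ (rk univ - 1)) = 1 := by
  have hprod := kernelIdealLift_prod_dragonClass_pow (rk := rk) (fun _ : Unit => univ)
    fun _ => rk univ - 1
  simpa only [univ_unique, prod_singleton, sum_singleton, isDragon_single_univ, if_true] using hprod

end DragonFamily

section PowerSeries

open PowerSeries (trunc exp rescale)

/-- The power series of `-log (1 - X)`; the junk value `0⁻¹ = 0` supplies its constant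
coefficient. -/
noncomputable def negLogOneSub : PowerSeries ℚ :=
  PowerSeries.mk fun n => (n : ℚ)⁻¹

theorem constantCoeff_negLogOneSub : PowerSeries.constantCoeff negLogOneSub = 0 := by
  simp [← PowerSeries.coeff_zero_eq_constantCoeff_apply, negLogOneSub]

theorem one_sub_X_mul_derivative_negLogOneSub :
    (1 - PowerSeries.X) * PowerSeries.derivative ℚ negLogOneSub = 1 := by
  rw [mul_comm]
  convert PowerSeries.mk_one_mul_one_sub_eq_one ℚ
  ext n
  rw [PowerSeries.coeff_derivative, negLogOneSub, PowerSeries.coeff_mk, PowerSeries.coeff_mk,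
    Nat.cast_succ, Pi.one_apply, inv_mul_cancel₀ n.cast_add_one_ne_zero]

theorem binomLowerP_zero (p : ℚ[X]) : binomLowerP p 0 = 1 := by
  simp [binomLowerP]

theorem binomLowerP_succ (p : ℚ[X]) (n : ℕ) :
    ((n : ℚ) + 1) • binomLowerP p (n + 1) = binomLowerP p n * (p + C (n : ℚ)) := by
  rw [binomLowerP, binomLowerP, prod_range_succ, smul_smul, smul_mul_assoc, Nat.factorial_succ,
    Nat.cast_mul, Nat.cast_succ, mul_inv, mul_inv_cancel_left₀ n.cast_add_one_ne_zero]

theorem binomLowerP_C_mul_X (k : ℚ) (n : ℕ) :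
    binomLowerP (C k * X) n = (binomLowerP X n).comp (C k * X) := by
  simp only [binomLowerP, smul_comp, Polynomial.prod_comp, add_comp, X_comp, C_comp]

/-- The coefficient of `q ^ j` in `(1 - X) ^ (-q) = ∑ n, binom(q + n - 1, n) * X ^ n`. -/
noncomputable def risingCoeffSeries (j : ℕ) : PowerSeries ℚ :=
  PowerSeries.mk fun n => (binomLowerP X n).coeff j

theorem risingCoeffSeries_zero : risingCoeffSeries 0 = 1 := by
  ext n
  rw [risingCoeffSeries, PowerSeries.coeff_mk, PowerSeries.coeff_one]
  obtain _ | n := n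
  · simp [binomLowerP_zero]
  · rw [binomLowerP, coeff_smul, coeff_zero_eq_eval_zero, eval_prod,
      prod_eq_zero (mem_range.2 n.succ_pos) (by simp), smul_zero, if_neg n.succ_ne_zero]

theorem constantCoeff_risingCoeffSeries_succ (j : ℕ) :
    PowerSeries.constantCoeff (risingCoeffSeries (j + 1)) = 0 := by
  simp [← PowerSeries.coeff_zero_eq_constantCoeff_apply, risingCoeffSeries, binomLowerP_zero,
    coeff_one]

theorem one_sub_X_mul_derivative_risingCoeffSeries (j : ℕ) :
    (1 - PowerSeries.X) * PowerSeries.derivative ℚ (risingCoeffSeries (j + 1)) =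
      risingCoeffSeries j := by
  ext n
  have hsucc := congrArg (coeff · (j + 1)) (binomLowerP_succ X n)
  simp only [coeff_smul, smul_eq_mul, mul_add, coeff_add, coeff_mul_X, coeff_mul_C] at hsucc
  rw [sub_mul, one_mul, map_sub, PowerSeries.coeff_derivative]
  obtain _ | n := n
  · simp only [risingCoeffSeries, PowerSeries.coeff_mk, PowerSeries.coeff_zero_X_mul]
    linear_combination hsucc
  · rw [PowerSeries.coeff_succ_X_mul, PowerSeries.coeff_derivative]
    simp only [risingCoeffSeries, PowerSeries.coeff_mk]
    push_cast at hsucc ⊢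
    linear_combination hsucc

theorem factorial_smul_risingCoeffSeries (j : ℕ) :
    (j.factorial : ℚ) • risingCoeffSeries j = negLogOneSub ^ j := by
  induction j with
  | zero => simp [risingCoeffSeries_zero]
  | succ j ih =>
    apply PowerSeries.derivative.ext
    · have hne : (1 - PowerSeries.X : PowerSeries ℚ) ≠ 0 :=
        left_ne_zero_of_mul_eq_one one_sub_X_mul_derivative_negLogOneSub
      apply mul_left_cancel₀ hne
      rw [Derivation.map_smul, mul_smul_comm, one_sub_X_mul_derivative_risingCoeffSeries,
        PowerSeries.derivative_pow, mul_left_comm, one_sub_X_mul_derivative_negLogOneSub,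
        Nat.add_sub_cancel, ← ih, Nat.factorial_succ, mul_one, ← nsmul_eq_mul,
        Nat.cast_mul, mul_smul, Nat.cast_smul_eq_nsmul]
    · rw [map_pow, constantCoeff_negLogOneSub, zero_pow j.succ_ne_zero,
        PowerSeries.smul_eq_C_mul, map_mul, constantCoeff_risingCoeffSeries_succ, mul_zero]

variable {A : Type*} [CommRing A] [Algebra ℚ A]

theorem aeval_trunc_coe {h : A} {N : ℕ} (hh : h ^ N = 0) (p : ℚ[X]) :
    aeval h (trunc N (p : PowerSeries ℚ)) = aeval h p := by
  have hdvd : X ^ N ∣ p - trunc N (p : PowerSeries ℚ) := by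
    rw [X_pow_dvd_iff]
    intro d hd
    rw [coeff_sub, PowerSeries.coeff_trunc, if_pos hd, coeff_coe, sub_self]
  obtain ⟨q, hq⟩ := hdvd
  rw [← sub_eq_zero, ← map_sub, ← neg_sub, hq, map_neg, map_mul, map_pow, aeval_X, hh, zero_mul,
    neg_zero]

theorem aeval_trunc_pow {h : A} {N : ℕ} (hh : h ^ N = 0) (f : PowerSeries ℚ) (n : ℕ) :
    aeval h (trunc N (f ^ n)) = aeval h (trunc N f) ^ n := by
  rw [← PowerSeries.trunc_trunc_pow, ← Polynomial.coe_pow, aeval_trunc_coe hh, map_pow]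

theorem aeval_trunc_eq_sum (h : A) (N : ℕ) (f : PowerSeries ℚ) :
    aeval h (trunc N f) = ∑ n ∈ range N, PowerSeries.coeff n f • h ^ n := by
  simp only [PowerSeries.trunc_apply, ← range_eq_Ico, map_sum, aeval_monomial, Algebra.smul_def]

/-- This is the coefficient of `q ^ j` in `(1 - h) ^ (-q * k) = exp (q * k * -log (1 - h))`. -/
theorem sum_binomLowerP_coeff_smul_pow {h : A} {N : ℕ} (hh : h ^ N = 0) (k : ℚ) (j : ℕ) :
    ∑ n ∈ range N, (binomLowerP (C k * X) n).coeff j • h ^ n =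
      (j.factorial : ℚ)⁻¹ • (k • aeval h (trunc N negLogOneSub)) ^ j := by
  rw [_root_.smul_pow, ← aeval_trunc_pow hh, ← factorial_smul_risingCoeffSeries, map_smul, map_smul,
    smul_comm (k ^ j), inv_smul_smul₀ (by positivity), aeval_trunc_eq_sum, smul_sum]
  refine sum_congr rfl fun n _ => ?_
  rw [binomLowerP_C_mul_X, comp_C_mul_X_coeff, risingCoeffSeries, PowerSeries.coeff_mk, smul_smul,
    mul_comm]

theorem prod_rescale_exp {ι : Type*} (s : Finset ι) (a : ι → A) :
    ∏ i ∈ s, rescale (a i) (exp A) = rescale (∑ i ∈ s, a i) (exp A) := by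
  induction s using Finset.induction_on with
  | empty => simp
  | insert i s hi ih =>
    rw [prod_insert hi, sum_insert hi, ih, PowerSeries.exp_mul_exp_eq_exp_add]

theorem coeff_C_mul_algebraMap (a : A) (p : ℚ[X]) (j : ℕ) :
    PowerSeries.coeff j (PowerSeries.C a * algebraMap ℚ[X] (PowerSeries A) p) = p.coeff j • a := by
  rw [PowerSeries.coeff_C_mul, PowerSeries.algebraMap_apply', PowerSeries.coeff_map, coeff_coe,
    Algebra.smul_def, mul_comm]

theorem coeff_rescale_exp (a : A) (j : ℕ) :
    PowerSeries.coeff j (rescale a (exp A)) = (j.factorial : ℚ)⁻¹ • a ^ j := by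
  rw [PowerSeries.coeff_rescale, PowerSeries.coeff_exp, one_div, mul_comm, Algebra.smul_def]

theorem rescale_exp_eq_sum {h : A} {N : ℕ} (hh : h ^ N = 0) (k : ℚ) :
    rescale (k • aeval h (trunc N negLogOneSub)) (exp A) =
      ∑ n ∈ range N, PowerSeries.C (h ^ n) *
        algebraMap ℚ[X] (PowerSeries A) (binomLowerP (C k * X) n) := by
  ext j
  simp only [map_sum, coeff_C_mul_algebraMap, coeff_rescale_exp,
    sum_binomLowerP_coeff_smul_pow hh]

theorem sum_prod_binomLowerP_coeff_smul {ι : Type*} [Fintype ι] [DecidableEq ι] {h : ι → A}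
    {N : ℕ} (hh : ∀ i, h i ^ N = 0) (k : ι → ℚ) (j : ℕ) :
    ∑ κ ∈ Fintype.piFinset fun _ : ι => range N,
        (∏ i, binomLowerP (C (k i) * X) (κ i)).coeff j • ∏ i, h i ^ κ i =
      (j.factorial : ℚ)⁻¹ • (∑ i, k i • aeval (h i) (trunc N negLogOneSub)) ^ j := by
  rw [← coeff_rescale_exp, ← prod_rescale_exp]
  simp only [rescale_exp_eq_sum (hh _), prod_univ_sum, prod_mul_distrib, ← map_prod,
    map_sum, coeff_C_mul_algebraMap]

theorem aeval_pow_eq_pow_of_coeff_one {K B : Type*} [CommRing K] [CommRing B] [Algebra K B]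
    {h : B} {n : ℕ} (hh : h ^ (n + 1) = 0) {p : K[X]} (h0 : p.coeff 0 = 0)
    (h1 : p.coeff 1 = 1) :
    aeval h p ^ n = h ^ n := by
  obtain ⟨q, hq⟩ : X ∣ p := X_dvd_iff.2 h0
  obtain ⟨u, hu⟩ : X ∣ q - 1 := by
    rw [X_dvd_iff, coeff_sub, coeff_one_zero, ← h1, hq, coeff_X_mul, sub_self]
  obtain ⟨v, hv⟩ : q - 1 ∣ q ^ n - 1 := by simpa only [one_pow] using sub_dvd_pow_sub_pow q 1 n
  have hexpand : p ^ n = X ^ n + X ^ (n + 1) * (u * v) := by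
    rw [hq, mul_pow]
    linear_combination X ^ n * hv + X ^ n * v * hu
  rw [← map_pow, hexpand, map_add, map_mul, map_pow, map_pow, aeval_X, hh, zero_mul, add_zero]

end PowerSeries

section Snapper

variable {α : Type*} [Fintype α] [DecidableEq α] {rk : Finset α → ℕ} {m : ℕ} {S : Fin m → Finset α}

/-- The Snapper polynomial of the classes `k i • h_{S i}`, in the variable `q`. -/
noncomputable def snapperPolynomial (rk : Finset α → ℕ) (S : Fin m → Finset α) (k : Fin m → ℚ) :
    ℚ[X] :=
  ∑ᶠ (κ : Fin m → ℕ) (_ : DragonHallRado rk S κ), ∏ i, binomLowerP (C (k i) * X) (κ i)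

/-- The divisor class `∑ i, k i • h_{S i}` in the Chow ring. -/
noncomputable def snapperClass (rk : Finset α → ℕ) (S : Fin m → Finset α) (k : Fin m → ℚ) :
    ChowRingQ rk :=
  Ideal.Quotient.mk (chowIdealQ rk) (∑ i, MvPolynomial.C (k i) * hPolyQ rk (S i))

theorem snapperClass_eq_sum (rk : Finset α → ℕ) (S : Fin m → Finset α) (k : Fin m → ℚ) :
    snapperClass rk S k = ∑ i, k i • chowClass rk (S i) := by
  rw [snapperClass, map_sum]
  refine sum_congr rfl fun i _ => ?_
  rw [Algebra.smul_def, map_mul]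
  rfl

theorem DragonHallRado.lt_rank_univ (hM : IsMatroidRank rk) {κ : Fin m → ℕ}
    (hκ : DragonHallRado rk S κ) (i : Fin m) : κ i < rk univ := by
  have hi := hκ {i} (singleton_nonempty i)
  rw [sum_singleton, singleton_biUnion] at hi
  have hle := hM.mono (subset_univ (S i))
  omega

theorem snapperPolynomial_eq_sum (hM : IsMatroidRank rk) (S : Fin m → Finset α) (k : Fin m → ℚ)
    {N : ℕ} (hN : rk univ ≤ N) :
    snapperPolynomial rk S k = ∑ κ ∈ Fintype.piFinset fun _ => range N,
      if DragonHallRado rk S κ then ∏ i, binomLowerP (C (k i) * X) (κ i) else 0 := by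
  rw [← sum_filter]
  refine finsum_cond_eq_sum_of_cond_iff _ fun {κ} _ => ⟨fun hκ => mem_filter.2 ⟨?_, hκ⟩,
    fun hκ => (mem_filter.1 hκ).2⟩
  exact Fintype.mem_piFinset.2 fun i => mem_range.2 ((hκ.lt_rank_univ hM i).trans_le hN)

theorem dragonClass_pow_eq_zero (hM : IsMatroidRank rk) {T : Finset α} (hT : T.Nonempty) :
    dragonClass rk T ^ (rk univ + 1) = 0 :=
  (isSimplicialFamily_dragonClass hM).pow_eq_zero hM hT
    ((hM.mono (subset_univ T)).trans (Nat.le_succ _))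

theorem coeff_snapperPolynomial (hM : IsMatroidRank rk) (hS : ∀ i, 0 < rk (S i)) (k : Fin m → ℚ)
    (j : ℕ) :
    (snapperPolynomial rk S k).coeff j = (j.factorial : ℚ)⁻¹ *
      kernelIdealLift (dragonFunctional rk)
        ((∑ i, k i • aeval (dragonClass rk (S i))
          (PowerSeries.trunc (rk univ + 1) negLogOneSub)) ^ j) := by
  have hnil (i) := dragonClass_pow_eq_zero hM (hM.nonempty_of_rank_pos (hS i))
  rw [← smul_eq_mul, ← map_smul, ← sum_prod_binomLowerP_coeff_smul hnil, map_sum,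
    snapperPolynomial_eq_sum hM S k (Nat.le_add_right _ 1), finsetSum_coeff]
  refine sum_congr rfl fun κ _ => ?_
  rw [map_smul, kernelIdealLift_prod_dragonClass_pow, isDragon_sum_single_iff hM hS]
  split_ifs <;> simp

theorem exists_linearMap_coeff_snapperPolynomial (hM : IsMatroidRank rk) (hr : 1 ≤ rk univ) :
    ∃ φ : ChowRingQ rk →ₗ[ℚ] ℚ, φ (chowClass rk univ ^ (rk univ - 1)) = 1 ∧
      ∀ {m : ℕ} {S : Fin m → Finset α}, (∀ i, 0 < rk (S i)) → ∀ (k : Fin m → ℚ) (j : ℕ),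
        (snapperPolynomial rk S k).coeff j = (j.factorial : ℚ)⁻¹ * φ (snapperClass rk S k ^ j) := by
  let L := PowerSeries.trunc (rk univ + 1) negLogOneSub
  have hL0 : L.coeff 0 = 0 := by
    simp [L, PowerSeries.coeff_trunc, negLogOneSub]
  have hL1 : L.coeff 1 = 1 := by
    simp [L, PowerSeries.coeff_trunc, negLogOneSub, Nat.pos_iff_ne_zero.1 hr]
  have hx := isSimplicialFamily_dragonClass hM
  obtain ⟨f, hf⟩ := exists_chowRingQ_lift hM (hx.aeval hL0)
  refine ⟨kernelIdealLift (dragonFunctional rk) ∘ₗ f.toLinearMap, ?_, fun hS k j => ?_⟩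
  · have hE : (univ : Finset α).Nonempty := hM.nonempty_of_rank_pos hr
    have hpow : dragonClass rk univ ^ (rk univ - 1 + 1) = 0 := hx.pow_eq_zero hM hE (by omega)
    rw [LinearMap.comp_apply, AlgHom.toLinearMap_apply, map_pow, hf _ hE,
      aeval_pow_eq_pow_of_coeff_one hpow hL0 hL1, kernelIdealLift_dragonClass_univ_pow]
  · rw [coeff_snapperPolynomial hM hS, snapperClass_eq_sum, LinearMap.comp_apply,
      AlgHom.toLinearMap_apply, map_pow f, map_sum f]
    simp only [map_smul, hf _ (hM.nonempty_of_rank_pos (hS _)), L]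

theorem snapperClass_pow_mem_span (hM : IsMatroidRank rk) (hS : ∀ i, 0 < rk (S i))
    (k : Fin m → ℚ) {n : ℕ} (hn : rk univ ≤ n + 1) :
    snapperClass rk S k ^ n ∈ Submodule.span ℚ {chowClass rk univ ^ n} := by
  refine (isSimplicialFamily_chowClass hM).pow_mem_span_pow hM hn ?_
  rw [snapperClass_eq_sum]
  exact sum_mem fun i _ => Submodule.smul_mem _ _
    (Submodule.subset_span ⟨S i, hM.nonempty_of_rank_pos (hS i), rfl⟩)

theorem snapperClass_pow_eq_zero (hM : IsMatroidRank rk) (hr : 1 ≤ rk univ)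
    (hS : ∀ i, 0 < rk (S i)) (k : Fin m → ℚ) {n : ℕ} (hn : rk univ ≤ n) :
    snapperClass rk S k ^ n = 0 := by
  obtain ⟨s, rfl⟩ : ∃ s, n = s + 1 := ⟨n - 1, by omega⟩
  have hmem := snapperClass_pow_mem_span hM hS k (hn.trans (Nat.le_succ _))
  rwa [(isSimplicialFamily_chowClass hM).pow_eq_zero hM (hM.nonempty_of_rank_pos hr) hn,
    Submodule.span_zero_singleton, Submodule.mem_bot] at hmem

theorem chowClass_univ_pow_ne_zero (hM : IsMatroidRank rk) (hr : 1 ≤ rk univ) :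
    chowClass rk univ ^ (rk univ - 1) ≠ 0 := by
  obtain ⟨φ, hφ, -⟩ := exists_linearMap_coeff_snapperPolynomial hM hr
  intro hzero
  rw [hzero, map_zero] at hφ
  exact zero_ne_one hφ

theorem coeff_snapperPolynomial_ne_zero_iff (hM : IsMatroidRank rk) (hr : 1 ≤ rk univ)
    (hS : ∀ i, 0 < rk (S i)) (k : Fin m → ℚ) :
    (snapperPolynomial rk S k).coeff (rk univ - 1) ≠ 0 ↔
      snapperClass rk S k ^ (rk univ - 1) ≠ 0 := by
  obtain ⟨φ, hφE, hφ⟩ := exists_linearMap_coeff_snapperPolynomial hM hr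
  obtain ⟨a, ha⟩ := Submodule.mem_span_singleton.1
    (snapperClass_pow_mem_span hM hS k (n := rk univ - 1) (by omega))
  rw [hφ hS, ← ha, map_smul, hφE, smul_eq_mul, mul_one,
    smul_ne_zero_iff_left (chowClass_univ_pow_ne_zero hM hr)]
  exact mul_ne_zero_iff_left (by positivity)

theorem coeff_snapperPolynomial_eq_zero (hM : IsMatroidRank rk) (hr : 1 ≤ rk univ)
    (hS : ∀ i, 0 < rk (S i)) {k : Fin m → ℚ} {j : ℕ} (hj : snapperClass rk S k ^ j = 0) :
    (snapperPolynomial rk S k).coeff j = 0 := by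
  obtain ⟨φ, -, hφ⟩ := exists_linearMap_coeff_snapperPolynomial hM hr
  rw [hφ hS, hj, map_zero, mul_zero]

theorem snapper_degree_le_numerical_dimension_general (hM : IsMatroidRank rk) (hr : 1 ≤ rk univ)
    (hS : ∀ i, 0 < rk (S i)) (k : Fin m → ℚ) :
    (∃ j, snapperClass rk S k ^ j ≠ 0 ∧ (∀ l, snapperClass rk S k ^ l ≠ 0 → l ≤ j) ∧
        (snapperPolynomial rk S k).natDegree ≤ j) ∧
      ((snapperPolynomial rk S k).natDegree = rk univ - 1 ↔
        snapperClass rk S k ^ (rk univ - 1) ≠ 0) := by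
  have hnontrivial : Nontrivial (ChowRingQ rk) :=
    nontrivial_of_ne _ 0 (chowClass_univ_pow_ne_zero hM hr)
  have hbound : ∀ l, snapperClass rk S k ^ l ≠ 0 → l < rk univ := fun l hl =>
    lt_of_not_ge (hl <| snapperClass_pow_eq_zero hM hr hS k ·)
  have hdegree {n : ℕ} (hn : ∀ l, snapperClass rk S k ^ l ≠ 0 → l ≤ n) :
      (snapperPolynomial rk S k).natDegree ≤ n :=
    natDegree_le_iff_coeff_eq_zero.2 fun l hl => coeff_snapperPolynomial_eq_zero hM hr hS
      (not_ne_iff.1 fun hne => (hn l hne).not_gt hl)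
  refine ⟨?_, fun hdeg => ?_, fun hne => ?_⟩
  · let j := Nat.findGreatest (snapperClass rk S k ^ · ≠ 0) (rk univ)
    have hmax : ∀ l, snapperClass rk S k ^ l ≠ 0 → l ≤ j := fun l hl =>
      Nat.le_findGreatest (hbound l hl).le hl
    refine ⟨j, Nat.findGreatest_spec (P := (snapperClass rk S k ^ · ≠ 0)) (Nat.zero_le _) ?_, hmax,
      hdegree hmax⟩
    exact pow_zero (snapperClass rk S k) ▸ one_ne_zero
  · obtain hzero | hpos := (rk univ - 1).eq_zero_or_pos
    · rw [hzero, pow_zero]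
      exact one_ne_zero
    · rw [← coeff_snapperPolynomial_ne_zero_iff hM hr hS, ← hdeg]
      exact leadingCoeff_ne_zero.2 (ne_zero_of_natDegree_gt (hdeg ▸ hpos))
  · exact natDegree_eq_of_le_of_coeff_ne_zero
      (hdegree fun l hl => Nat.le_sub_one_of_lt (hbound l hl))
      ((coeff_snapperPolynomial_ne_zero_iff hM hr hS k).2 hne)

end Snapper

/-- For a loopless matroid `M` of rank `r ≥ 1`, distinct nonempty subsets `S_1, …, S_m` and
integers `k_1, …, k_m`, the Snapper polynomial
`χ(q) = Σ_{κ dragon Hall–Rado} Π_i binom(q k_i + κ_i - 1, κ_i)` has degree at most the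
numerical dimension of `c = Σ k_i h_{S_i}` (the largest `j` with `c^j ≠ 0` in `A(M)_ℚ`, which
exists), and its degree equals `r - 1` if and only if `c^{r-1} ≠ 0`. -/
theorem snapper_degree_le_numerical_dimension
    {α : Type} [Fintype α] [DecidableEq α] {m r : ℕ}
    (rk : Finset α → ℕ) (hM : IsMatroidRank rk) (hloopless : ∀ e : α, rk {e} = 1)
    (hrank : rk Finset.univ = r) (hr : 1 ≤ r)
    (S : Fin m → Finset α) (hS : ∀ i, (S i).Nonempty) (hSinj : Function.Injective S)
    (k : Fin m → ℤ)
    (χ : Polynomial ℚ)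
    (hχ : χ = ∑ᶠ (κ : Fin m → ℕ) (_ : DragonHallRado rk S κ),
      ∏ i, binomLowerP (Polynomial.C (k i : ℚ) * Polynomial.X) (κ i))
    (c : ChowRingQ rk)
    (hc : c = Ideal.Quotient.mk (chowIdealQ rk)
      (∑ i, MvPolynomial.C (k i : ℚ) * hPolyQ rk (S i))) :
    (∃ j : ℕ, c ^ j ≠ 0 ∧ (∀ l : ℕ, c ^ l ≠ 0 → l ≤ j) ∧ χ.natDegree ≤ j) ∧
      (χ.natDegree = r - 1 ↔ c ^ (r - 1) ≠ 0) := by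
  subst hχ hc hrank
  have hpos (i : Fin m) : 0 < rk (S i) := by
    obtain ⟨e, he⟩ := hS i
    exact (hloopless e).ge.trans (hM.mono (singleton_subset_iff.2 he))
  exact snapper_degree_le_numerical_dimension_general hM hr hpos fun i => k i
end
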